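/- arXiv:math/0406201 — 4 statements merged into one kernel-verified Lean document; each statement's English description precedes it below -/
import Mathlib

section
/- There exists a₀ ∈ (0, 1/(2π)) such that for every a ∈ (0, a₀) there is a constant c_a < 1 with the following property: for every continuously differentiable 1-periodic function q : ℝ → ℝ, the function T_a q is continuously differentiable and sup_{x ∈ [0,1]} |(T_a q)'(x)| ≤ c_a · max( sup_{x ∈ [0,1]} |q(x)|, sup_{x ∈ [0,1]} |q'(x)| ). -/
/-- A continuous function of period `1` is bounded everywhere by its supremum over `[0, 1]`. -/
lemma Function.Periodic.abs_le_sSup_image_Icc {f : ℝ → ℝ} (hp : Function.Periodic f 1)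
    (hc : Continuous f) (y : ℝ) :
    |f y| ≤ sSup ((fun x => |f x|) '' Set.Icc (0:ℝ) 1) := by
  obtain ⟨z, hz, hyz⟩ := hp.exists_mem_Ico₀ one_pos y
  rw [hyz]
  exact le_csSup (isCompact_Icc.image hc.abs).bddAbove ⟨z, Set.Ico_subset_Icc_self hz, rfl⟩

lemma hasDerivAt_two_mul_add_sin (a x : ℝ) :
    HasDerivAt (fun x => 2 * x + a * Real.sin (2 * Real.pi * x))
      (2 + 2 * Real.pi * a * Real.cos (2 * Real.pi * x)) x := by
  have h := ((hasDerivAt_id x).const_mul 2).add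
    (((hasDerivAt_id x).const_mul (2 * Real.pi)).sin.const_mul a)
  refine h.congr_deriv ?_
  simp only [id]
  ring

lemma hasDerivAt_two_add_cos (a x : ℝ) :
    HasDerivAt (fun x => 2 + 2 * Real.pi * a * Real.cos (2 * Real.pi * x))
      (-(4 * Real.pi ^ 2 * a * Real.sin (2 * Real.pi * x))) x := by
  have h := (((hasDerivAt_id x).const_mul (2 * Real.pi)).cos.const_mul
    (2 * Real.pi * a)).const_add 2
  refine h.congr_deriv ?_
  simp only [id]
  ring

/-- A left inverse of a `C¹` function with nonvanishing derivative that is also a right inverse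
is differentiable, with the reciprocal derivative. -/
lemma hasDerivAt_of_inverse {F F' φ : ℝ → ℝ} (hF : ∀ x, HasDerivAt F (F' x) x)
    (hF' : Continuous F') (h0 : ∀ x, F' x ≠ 0) (hr : ∀ x, F (φ x) = x) (hl : ∀ x, φ (F x) = x)
    (x : ℝ) : HasDerivAt φ (F' (φ x))⁻¹ x := by
  have hs : HasStrictDerivAt F (F' (φ x)) (φ x) :=
    hasStrictDerivAt_of_hasDerivAt_of_continuousAt (.of_forall hF) hF'.continuousAt
  have h := hs.to_local_left_inverse (h0 _) (.of_forall hl)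
  rw [hr] at h
  exact h.hasDerivAt

/-- The derivative of one branch of the transfer operator, for a Jacobian `d ≥ 19/10` whose
derivative `e` is at most `2/5` in absolute value. -/
lemma abs_branch_deriv_le {u v d e M : ℝ} (hu : |u| ≤ M) (hv : |v| ≤ M) (hd : 19 / 10 ≤ d)
    (he : |e| ≤ 2 / 5) : |(v * d - u * e) / d ^ 2 * d⁻¹| ≤ 3 / 8 * M := by
  have hd0 : 0 < d := by linarith
  have hM : 0 ≤ M := (abs_nonneg u).trans hu
  have hnum : |v * d - u * e| ≤ M * (d + 2 / 5) := by
    calc |v * d - u * e| ≤ |v * d| + |u * e| := abs_sub _ _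
      _ = |v| * d + |u| * |e| := by rw [abs_mul, abs_mul, abs_of_pos hd0]
      _ ≤ M * d + M * (2 / 5) := by gcongr
      _ = M * (d + 2 / 5) := by ring
  have hcube : d + 2 / 5 ≤ 3 / 8 * d ^ 3 := by
    have hsq : (19 / 10) ^ 2 ≤ d ^ 2 := by gcongr
    nlinarith
  have heq : (v * d - u * e) / d ^ 2 * d⁻¹ = (v * d - u * e) / d ^ 3 := by field_simp
  rw [heq, abs_div, abs_of_pos (pow_pos hd0 3), div_le_iff₀ (pow_pos hd0 3)]
  calc |v * d - u * e| ≤ M * (d + 2 / 5) := hnum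
    _ ≤ M * (3 / 8 * d ^ 3) := by gcongr
    _ = 3 / 8 * M * d ^ 3 := by ring

/-- Key estimate of Section 2.1: for sufficiently small `a`, there is `c_a < 1` such that
for every `C¹` 1-periodic `q`, the transfer-operator image `T_a q` is `C¹` and
`sup |(T_a q)'| ≤ c_a · max(sup |q|, sup |q'|)` on `[0,1]`. -/
theorem stmt9 :
    ∃ a₀ ∈ Set.Ioo (0:ℝ) (1/(2*Real.pi)), ∀ a ∈ Set.Ioo (0:ℝ) a₀,
    ∃ c : ℝ, c < 1 ∧
    ∀ φ : ℝ → ℝ,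
      (∀ x : ℝ, 2*(φ x) + a*Real.sin (2*Real.pi*(φ x)) = x) →
      (∀ x : ℝ, φ (2*x + a*Real.sin (2*Real.pi*x)) = x) →
    ∀ q : ℝ → ℝ, ContDiff ℝ 1 q → Function.Periodic q 1 →
      let F : ℝ → ℝ := fun x => 2*x + a*Real.sin (2*Real.pi*x)
      let Tq : ℝ → ℝ := fun x => q (φ x) / deriv F (φ x) + q (φ (x+1)) / deriv F (φ (x+1))
      ContDiff ℝ 1 Tq ∧
      sSup ((fun x => |deriv Tq x|) '' Set.Icc (0:ℝ) 1) ≤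
        c * max (sSup ((fun x => |q x|) '' Set.Icc (0:ℝ) 1))
                (sSup ((fun x => |deriv q x|) '' Set.Icc (0:ℝ) 1)) := by
  have hpi := Real.pi_pos
  have hpi' := Real.pi_lt_d2
  refine ⟨1 / 100, ⟨by norm_num, ?_⟩, ?_⟩
  · exact one_div_lt_one_div_of_lt (by positivity) (by linarith)
  rintro a ⟨ha0, ha⟩
  refine ⟨3 / 4, by norm_num, ?_⟩
  intro φ hr hl q hq hper F Tq
  set d : ℝ → ℝ := fun x => 2 + 2 * Real.pi * a * Real.cos (2 * Real.pi * x) with hd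
  set e : ℝ → ℝ := fun x => -(4 * Real.pi ^ 2 * a * Real.sin (2 * Real.pi * x)) with he
  have hF : ∀ x, HasDerivAt F (d x) x := hasDerivAt_two_mul_add_sin a
  have hdd : ∀ x, HasDerivAt d (e x) x := hasDerivAt_two_add_cos a
  have hdc : Continuous d := by fun_prop
  have hec : Continuous e := by fun_prop
  have hd_ge : ∀ x, 19 / 10 ≤ d x := fun x => by
    have h1 : 2 * Real.pi * a ≤ 1 / 10 := by nlinarith
    have h2 : 0 < 2 * Real.pi * a := by positivity
    have h3 := Real.neg_one_le_cos (2 * Real.pi * x)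
    simp only [hd]
    nlinarith
  have he_le : ∀ x, |e x| ≤ 2 / 5 := fun x => by
    have h1 : 4 * Real.pi ^ 2 * a ≤ 2 / 5 := by
      have : Real.pi ^ 2 ≤ 3.15 ^ 2 := by gcongr
      nlinarith
    have h2 : 0 < 4 * Real.pi ^ 2 * a := by positivity
    simp only [he]
    rw [abs_neg, abs_mul, abs_of_pos h2]
    exact (mul_le_of_le_one_right h2.le (Real.abs_sin_le_one _)).trans h1
  have hd0 : ∀ x, d x ≠ 0 := fun x => by linarith [hd_ge x]
  have hφ : ∀ x, HasDerivAt φ (d (φ x))⁻¹ x := hasDerivAt_of_inverse hF hdc hd0 hr hl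
  have hφc : Continuous φ := continuous_iff_continuousAt.2 fun x => (hφ x).continuousAt
  have hqd : ∀ x, HasDerivAt q (deriv q x) x := fun x =>
    (hq.differentiable one_ne_zero x).hasDerivAt
  have hqc' : Continuous (deriv q) := hq.continuous_deriv le_rfl
  set g : ℝ → ℝ := fun x =>
    (deriv q (φ x) * d (φ x) - q (φ x) * e (φ x)) / d (φ x) ^ 2 * (d (φ x))⁻¹ with hg
  have hbranch : ∀ x, HasDerivAt (fun x => q (φ x) / d (φ x)) (g x) x := fun x =>
    ((hqd (φ x)).div (hdd (φ x)) (hd0 _)).comp x (hφ x)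
  have hgc : Continuous g := by
    have hqc := hq.continuous
    have hdφ : Continuous fun x => d (φ x) := hdc.comp hφc
    exact ((((hqc'.comp hφc).mul hdφ).sub ((hqc.comp hφc).mul (hec.comp hφc))).div
      (hdφ.pow 2) fun x => pow_ne_zero 2 (hd0 _)).mul (hdφ.inv₀ fun x => hd0 _)
  have hTq : Tq = fun x => q (φ x) / d (φ x) + q (φ (x + 1)) / d (φ (x + 1)) := by
    simp only [Tq, (hF _).deriv]
  have hT : ∀ x, HasDerivAt Tq (g x + g (x + 1)) x := fun x => by
    rw [hTq]
    exact (hbranch x).add ((hbranch (x + 1)).comp_add_const x 1)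
  have hT' : deriv Tq = fun x => g x + g (x + 1) := funext fun x => (hT x).deriv
  refine ⟨contDiff_one_iff_deriv.2 ⟨fun x => (hT x).differentiableAt, ?_⟩, ?_⟩
  · rw [hT']
    fun_prop
  have hper' : Function.Periodic (deriv q) 1 := fun x => by
    rw [← deriv_comp_add_const, funext hper]
  have hg_le : ∀ x, |g x| ≤ 3 / 8 * max (sSup ((fun x => |q x|) '' Set.Icc (0:ℝ) 1))
      (sSup ((fun x => |deriv q x|) '' Set.Icc (0:ℝ) 1)) := fun x =>
    abs_branch_deriv_le
      ((hper.abs_le_sSup_image_Icc hq.continuous _).trans (le_max_left _ _))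
      ((hper'.abs_le_sSup_image_Icc hqc' _).trans (le_max_right _ _)) (hd_ge _) (he_le _)
  refine csSup_le ((Set.nonempty_Icc.2 zero_le_one).image _) ?_
  rintro _ ⟨x, -, rfl⟩
  simp only [hT']
  linarith [abs_add_le (g x) (g (x + 1)), hg_le x, hg_le (x + 1)]
end

section
/- There exists a₀ ∈ (0, 1/(2π)) such that for every a ∈ (0, a₀) the following holds. Let f : ℝ/ℤ → ℝ/ℤ be the circle map induced by F_a(x) = 2x + a sin(2πx). Let ρ₀ be a nonconstant, three times continuously differentiable probability density on ℝ/ℤ whose measure μ₀ (Lebesgue measure with density ρ₀) satisfies μ₀ ∘ f⁻¹ = μ₀. For ε > 0 let ν_ε be the probability measure on ℝ/ℤ obtained as the pushforward, under the quotient map ℝ → ℝ/ℤ, of the uniform probability measure on [−ε, ε]. Then there exist constants c₁ > 0, c₂ > 0 and ε₁ > 0 such that: for every ε ∈ (0, ε₁) and every continuously differentiable probability density ρ_ε on ℝ/ℤ whose measure μ_ε satisfies (μ_ε ∘ f⁻¹) ∗ ν_ε = μ_ε (convolution of measures on ℝ/ℤ), one has c₁ ε² ≤ ∫_{ℝ/ℤ}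 |ρ_ε − ρ₀| ≤ c₂ ε². -/
open MeasureTheory

/-- The average of `ψ` over the window `[y - ε, y + ε]`. -/
noncomputable def windowAverage (ε : ℝ) (ψ : ℝ → ℝ) (y : ℝ) : ℝ :=
  (2 * ε)⁻¹ * ∫ t in (-ε)..ε, ψ (y + t)

lemma exists_antideriv {ψ : ℝ → ℝ} (hψ : Continuous ψ) :
    ∃ A : ℝ → ℝ, (∀ x, HasDerivAt A (ψ x) x) ∧
      ∀ ε y, windowAverage ε ψ y = (A (y + ε) - A (y - ε)) / (2 * ε) := by
  refine ⟨fun x => ∫ s in (0:ℝ)..x, ψ s, fun x => hψ.integral_hasStrictDerivAt 0 x |>.hasDerivAt,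
    fun ε y => ?_⟩
  rw [windowAverage, intervalIntegral.integral_comp_add_left,
    intervalIntegral.integral_interval_sub_left (hψ.intervalIntegrable _ _)
      (hψ.intervalIntegrable _ _), ← sub_eq_add_neg]
  ring

lemma hasDerivAt_windowAverage {ψ : ℝ → ℝ} (hψ : Continuous ψ) (ε y : ℝ) :
    HasDerivAt (windowAverage ε ψ) ((ψ (y + ε) - ψ (y - ε)) / (2 * ε)) y := by
  obtain ⟨A, hA, hAε⟩ := exists_antideriv hψ
  rw [funext (hAε ε)]
  exact (((hA (y + ε)).comp_add_const y ε).sub ((hA (y - ε)).comp_sub_const y ε)).div_const _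

lemma continuous_windowAverage {ψ : ℝ → ℝ} (hψ : Continuous ψ) (ε : ℝ) :
    Continuous (windowAverage ε ψ) :=
  continuous_iff_continuousAt.2 fun y => (hasDerivAt_windowAverage hψ ε y).continuousAt

lemma periodic_windowAverage {ψ : ℝ → ℝ} (hψ : Function.Periodic ψ 1) (ε : ℝ) :
    Function.Periodic (windowAverage ε ψ) 1 := by
  intro y
  simp only [windowAverage, add_right_comm y 1, hψ _]

lemma abs_windowAverage_le {ψ : ℝ → ℝ} {C ε : ℝ} (hC : ∀ x, |ψ x| ≤ C) (hε : 0 < ε) (y : ℝ) :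
    |windowAverage ε ψ y| ≤ C := by
  have h := intervalIntegral.norm_integral_le_of_norm_le_const (a := -ε) (b := ε)
    (f := fun t => ψ (y + t)) (C := C) fun t _ => hC _
  rw [Real.norm_eq_abs, show ε - -ε = 2 * ε by ring, abs_of_pos (by positivity : 0 < 2 * ε)] at h
  rw [windowAverage, abs_mul, abs_of_pos (by positivity : 0 < (2 * ε)⁻¹)]
  calc (2 * ε)⁻¹ * |∫ t in (-ε)..ε, ψ (y + t)| ≤ (2 * ε)⁻¹ * (C * (2 * ε)) := by gcongr
    _ = C := by field_simp

lemma integral_windowAverage_mul {ψ Φ : ℝ → ℝ} (hψ : Continuous ψ) (hΦ : Continuous Φ)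
    (pψ : Function.Periodic ψ 1) (pΦ : Function.Periodic Φ 1) (ε : ℝ) :
    ∫ x in (0:ℝ)..1, windowAverage ε ψ x * Φ x = ∫ x in (0:ℝ)..1, ψ x * windowAverage ε Φ x := by
  have swap : ∀ H : ℝ → ℝ → ℝ, Continuous (Function.uncurry H) →
      ∫ x in (0:ℝ)..1, ∫ t in (-ε)..ε, H x t = ∫ t in (-ε)..ε, ∫ x in (0:ℝ)..1, H x t := by
    intro H hH
    refine intervalIntegral_intervalIntegral_swap ?_
    exact (hH.continuousOn.integrableOn_compact (isCompact_uIcc.prod isCompact_uIcc)).mono_set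
      (Set.prod_mono Set.uIoc_subset_uIcc Set.uIoc_subset_uIcc)
  have hl : ∀ x, windowAverage ε ψ x * Φ x = (2 * ε)⁻¹ * ∫ t in (-ε)..ε, ψ (x + t) * Φ x := by
    intro x
    rw [intervalIntegral.integral_mul_const, windowAverage, mul_assoc]
  have hr : ∀ x, ψ x * windowAverage ε Φ x = (2 * ε)⁻¹ * ∫ t in (-ε)..ε, ψ x * Φ (x + t) := by
    intro x
    rw [intervalIntegral.integral_const_mul, windowAverage]
    ring
  simp only [hl, hr]
  rw [intervalIntegral.integral_const_mul, intervalIntegral.integral_const_mul]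
  congr 1
  rw [swap _ (by fun_prop), swap _ (by fun_prop)]
  have hneg := intervalIntegral.integral_comp_neg (a := -ε) (b := ε)
    (fun t => ∫ x in (0:ℝ)..1, ψ x * Φ (x + t))
  rw [neg_neg] at hneg
  rw [← hneg]
  refine intervalIntegral.integral_congr fun t _ => ?_
  have hper : Function.Periodic (fun x => ψ x * Φ (x + -t)) 1 := fun x => by
    simp only [pψ x, add_right_comm x 1, pΦ _]
  have h1 := hper.intervalIntegral_add_eq t 0
  have h2 := intervalIntegral.integral_comp_add_right (a := 0) (b := 1)
    (fun x => ψ x * Φ (x + -t)) t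
  simp only [add_neg_cancel_right, zero_add] at h1 h2
  rw [add_comm 1 t] at h2
  exact h2.trans h1

lemma abs_le_mul_of_abs_deriv_le {q q' : ℝ → ℝ} {C ε : ℝ} (hq : ∀ t, HasDerivAt q (q' t) t)
    (h0 : q 0 = 0) (hC : ∀ t ∈ Set.Icc 0 ε, |q' t| ≤ C) : ∀ t ∈ Set.Icc 0 ε, |q t| ≤ C * ε := by
  intro t ht
  have h := norm_image_sub_le_of_norm_deriv_le_segment' (fun x _ => (hq x).hasDerivWithinAt)
    (fun x hx => hC x ⟨hx.1, hx.2.le⟩) t ht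
  rw [h0, sub_zero, sub_zero, Real.norm_eq_abs] at h
  have hC0 : 0 ≤ C := (abs_nonneg _).trans (hC t ht)
  exact h.trans (by gcongr; exact ht.2)

lemma abs_sub_le_of_hasDerivAt {g g' : ℝ → ℝ} {K : ℝ} (hg : ∀ x, HasDerivAt g (g' x) x)
    (hK : ∀ x, |g' x| ≤ K) (x y : ℝ) : |g x - g y| ≤ K * |x - y| :=
  Convex.norm_image_sub_le_of_norm_hasDerivWithin_le (s := Set.univ)
    (fun x _ => (hg x).hasDerivWithinAt) (fun x _ => hK x) convex_univ trivial trivial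

lemma abs_symmetric_difference_sub_deriv_le {P P₁ P₂ P₃ : ℝ → ℝ} {K ε : ℝ}
    (h₁ : ∀ x, HasDerivAt P (P₁ x) x) (h₂ : ∀ x, HasDerivAt P₁ (P₂ x) x)
    (h₃ : ∀ x, HasDerivAt P₂ (P₃ x) x) (hK : ∀ x, |P₃ x| ≤ K) (hε : 0 < ε) (y : ℝ) :
    |(P (y + ε) - P (y - ε)) / (2 * ε) - P₁ y| ≤ K * ε ^ 2 := by
  have hK0 : 0 ≤ K := (abs_nonneg _).trans (hK 0)
  have b₂ : ∀ t ∈ Set.Icc 0 ε, |P₂ (y + t) - P₂ (y - t)| ≤ 2 * K * ε := by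
    intro t ht
    refine (abs_sub_le_of_hasDerivAt h₃ hK _ _).trans ?_
    rw [show y + t - (y - t) = 2 * t by ring, abs_of_nonneg (by linarith [ht.1])]
    nlinarith [ht.2]
  have b₁ := abs_le_mul_of_abs_deriv_le (q := fun t => P₁ (y + t) + P₁ (y - t) - 2 * P₁ y)
    (fun t => by
      simpa using ((h₂ (y + t)).comp_const_add y t |>.add
        ((h₂ (y - t)).comp_const_sub y t)).sub_const (2 * P₁ y)) (by simp; ring)
    (fun t ht => by simpa [sub_eq_add_neg] using b₂ t ht)
  have b₀ := abs_le_mul_of_abs_deriv_le (q := fun t => P (y + t) - P (y - t) - t * (2 * P₁ y))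
    (fun t => ((h₁ (y + t)).comp_const_add y t |>.sub
        ((h₁ (y - t)).comp_const_sub y t)).sub ((hasDerivAt_id t).mul_const (2 * P₁ y))) (by simp)
    (fun t ht => by simpa [sub_eq_add_neg] using b₁ t ht) ε ⟨hε.le, le_rfl⟩
  rw [show (P (y + ε) - P (y - ε)) / (2 * ε) - P₁ y
      = (P (y + ε) - P (y - ε) - ε * (2 * P₁ y)) / (2 * ε) by field_simp, abs_div,
    abs_of_pos (by positivity : 0 < 2 * ε), div_le_iff₀ (by positivity)]
  exact b₀.trans_eq (by ring)

lemma abs_windowAverage_sub_sub_le {P P₁ P₂ P₃ : ℝ → ℝ} {K ε : ℝ}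
    (h₁ : ∀ x, HasDerivAt P (P₁ x) x) (h₂ : ∀ x, HasDerivAt P₁ (P₂ x) x)
    (h₃ : ∀ x, HasDerivAt P₂ (P₃ x) x) (hK : ∀ x, |P₃ x| ≤ K) (hε : 0 < ε) (y : ℝ) :
    |windowAverage ε P y - P y - ε ^ 2 / 6 * P₂ y| ≤ K * ε ^ 3 := by
  have hP : Continuous P := continuous_iff_continuousAt.2 fun x => (h₁ x).continuousAt
  obtain ⟨A, hA, hAε⟩ := exists_antideriv hP
  have b₃ : ∀ t ∈ Set.Icc 0 ε, |P₂ (y + t) + P₂ (y - t) - 2 * P₂ y| ≤ 2 * K * ε := by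
    intro t ht
    have e₁ := abs_sub_le_of_hasDerivAt h₃ hK (y + t) y
    have e₂ := abs_sub_le_of_hasDerivAt h₃ hK (y - t) y
    have hK0 : 0 ≤ K := (abs_nonneg _).trans (hK 0)
    have hKt : K * t ≤ K * ε := by gcongr; exact ht.2
    rw [add_sub_cancel_left, abs_of_nonneg ht.1] at e₁
    rw [show y - t - y = -t by ring, abs_neg, abs_of_nonneg ht.1] at e₂
    rw [show P₂ (y + t) + P₂ (y - t) - 2 * P₂ y
      = (P₂ (y + t) - P₂ y) + (P₂ (y - t) - P₂ y) by ring]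
    exact (abs_add_le _ _).trans (by linarith)
  have b₂ := abs_le_mul_of_abs_deriv_le
    (q := fun t => P₁ (y + t) - P₁ (y - t) - t * (2 * P₂ y))
    (fun t => ((h₂ (y + t)).comp_const_add y t |>.sub
        ((h₂ (y - t)).comp_const_sub y t)).sub ((hasDerivAt_id t).mul_const (2 * P₂ y))) (by simp)
    (fun t ht => by simpa [sub_eq_add_neg] using b₃ t ht)
  have b₁ := abs_le_mul_of_abs_deriv_le
    (q := fun t => P (y + t) + P (y - t) - t ^ 2 * P₂ y - 2 * P y)
    (q' := fun t => P₁ (y + t) + -P₁ (y - t) - 2 * t * P₂ y)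
    (fun t => by
      simpa using (((h₁ (y + t)).comp_const_add y t |>.add
        ((h₁ (y - t)).comp_const_sub y t)).sub
          (((hasDerivAt_id t).pow 2).mul_const (P₂ y))).sub_const (2 * P y)) (by simp; ring)
    (fun t ht => by
      have := b₂ t ht
      rw [← sub_eq_add_neg]
      convert this using 3
      ring)
  have b₀ := abs_le_mul_of_abs_deriv_le
    (q := fun t => A (y + t) - A (y - t) - t ^ 3 * (P₂ y / 3) - t * (2 * P y))
    (q' := fun t => P (y + t) - -P (y - t) - 3 * t ^ 2 * (P₂ y / 3) - 1 * (2 * P y))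
    (fun t => ((((hA (y + t)).comp_const_add y t |>.sub
        ((hA (y - t)).comp_const_sub y t)).sub
          (((hasDerivAt_id t).pow 3).mul_const (P₂ y / 3))).sub
            ((hasDerivAt_id t).mul_const (2 * P y))).congr_deriv (by simp)) (by simp)
    (fun t ht => by
      have := b₁ t ht
      convert this using 2
      ring) ε ⟨hε.le, le_rfl⟩
  rw [hAε, show (A (y + ε) - A (y - ε)) / (2 * ε) - P y - ε ^ 2 / 6 * P₂ y
      = (A (y + ε) - A (y - ε) - ε ^ 3 * (P₂ y / 3) - ε * (2 * P y)) / (2 * ε) by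
        field_simp; ring, abs_div,
    abs_of_pos (by positivity : 0 < 2 * ε), div_le_iff₀ (by positivity)]
  exact b₀.trans_eq (by ring)

/-- The lift `x ↦ 2x + a sin(2πx)` to the real line of the expanding circle map. -/
noncomputable def liftMap (a x : ℝ) : ℝ := 2 * x + a * Real.sin (2 * Real.pi * x)

/-- The derivative of `liftMap a`. -/
noncomputable def liftDeriv (a x : ℝ) : ℝ := 2 + a * (Real.cos (2 * Real.pi * x) * (2 * Real.pi))

lemma hasDerivAt_two_pi_mul (x : ℝ) : HasDerivAt (fun x => 2 * Real.pi * x) (2 * Real.pi) x := by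
  simpa using (hasDerivAt_id x).const_mul (2 * Real.pi)

lemma hasDerivAt_liftMap (a x : ℝ) : HasDerivAt (liftMap a) (liftDeriv a x) x := by
  refine HasDerivAt.add ?_ ((hasDerivAt_two_pi_mul x).sin.const_mul a)
  simpa using (hasDerivAt_id x).const_mul 2

lemma hasDerivAt_liftDeriv (a x : ℝ) :
    HasDerivAt (liftDeriv a) (a * (-Real.sin (2 * Real.pi * x) * (2 * Real.pi) * (2 * Real.pi))) x :=
  (((hasDerivAt_two_pi_mul x).cos.mul_const (2 * Real.pi)).const_mul a).const_add 2

lemma continuous_liftMap (a : ℝ) : Continuous (liftMap a) := by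
  unfold liftMap; fun_prop

lemma continuous_liftDeriv (a : ℝ) : Continuous (liftDeriv a) := by
  unfold liftDeriv; fun_prop

lemma liftMap_add_one (a x : ℝ) : liftMap a (x + 1) = liftMap a x + 2 := by
  simp only [liftMap, mul_add, mul_one, Real.sin_add_two_pi]
  ring

lemma liftDeriv_add_one (a x : ℝ) : liftDeriv a (x + 1) = liftDeriv a x := by
  simp only [liftDeriv, mul_add, mul_one, Real.cos_add_two_pi]

lemma le_liftDeriv {a : ℝ} (ha : a ∈ Set.Ioo (0:ℝ) (1 / 100)) (x : ℝ) : 1.9 ≤ liftDeriv a x := by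
  have hc := Real.neg_one_le_cos (2 * Real.pi * x)
  have hπ := Real.pi_lt_d2
  have hπ0 := Real.pi_pos
  have h1 : a * (2 * Real.pi) ≤ 0.1 := by nlinarith [ha.1, ha.2]
  have h2 : -(a * (2 * Real.pi)) ≤ a * (2 * Real.pi) * Real.cos (2 * Real.pi * x) := by
    nlinarith [mul_pos ha.1 hπ0]
  rw [liftDeriv]
  linarith

lemma abs_deriv_liftDeriv_le {a : ℝ} (ha : a ∈ Set.Ioo (0:ℝ) (1 / 100)) (x : ℝ) :
    |a * (-Real.sin (2 * Real.pi * x) * (2 * Real.pi) * (2 * Real.pi))| ≤ 0.4 := by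
  have hs := Real.abs_sin_le_one (2 * Real.pi * x)
  have hπ := Real.pi_lt_d2
  have hπ0 := Real.pi_pos
  have h2 : 2 * Real.pi * (2 * Real.pi) ≤ 40 := by nlinarith
  have h1 : a * (2 * Real.pi * (2 * Real.pi)) ≤ 0.4 := by nlinarith [ha.1, ha.2]
  have h0 : 0 ≤ a * (2 * Real.pi * (2 * Real.pi)) := by have := ha.1; positivity
  rw [show a * (-Real.sin (2 * Real.pi * x) * (2 * Real.pi) * (2 * Real.pi))
    = -(a * (2 * Real.pi * (2 * Real.pi))) * Real.sin (2 * Real.pi * x) by ring, abs_mul, abs_neg,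
    abs_of_nonneg h0]
  nlinarith [abs_nonneg (Real.sin (2 * Real.pi * x))]

lemma exists_inverse_liftMap {a : ℝ} (ha : a ∈ Set.Ioo (0:ℝ) (1 / 100)) :
    ∃ G : ℝ → ℝ, (∀ x, G (liftMap a x) = x) ∧ (∀ y, G (y + 2) = G y + 1) ∧
      ∀ y, HasDerivAt G (liftDeriv a (G y))⁻¹ y := by
  have hpos : ∀ x, 0 < liftDeriv a x := fun x => by linarith [le_liftDeriv ha x]
  have hmono := strictMono_of_hasDerivAt_pos (hasDerivAt_liftMap a) hpos
  have hsurj : Function.Surjective (liftMap a) := by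
    refine (continuous_liftMap a).surjective ?_ ?_
    · refine Filter.tendsto_atTop_mono (f := fun x => 2 * x + -a) (fun x => ?_) ?_
      · unfold liftMap
        nlinarith [Real.neg_one_le_sin (2 * Real.pi * x), ha.1]
      · exact Filter.tendsto_atTop_add_const_right _ _
          (Filter.tendsto_id.const_mul_atTop (by norm_num))
    · refine Filter.tendsto_atBot_mono (f := fun x => 2 * x + a) (fun x => ?_) ?_
      · unfold liftMap
        nlinarith [Real.sin_le_one (2 * Real.pi * x), ha.1]
      · exact Filter.tendsto_atBot_add_const_right _ _
          (Filter.tendsto_id.const_mul_atBot (by norm_num))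
  let e := hmono.orderIsoOfSurjective _ hsurj
  have hr : ∀ y, liftMap a (e.symm y) = y := e.apply_symm_apply
  refine ⟨e.symm, e.symm_apply_apply, fun y => hmono.injective ?_, fun y => ?_⟩
  · rw [liftMap_add_one, hr, hr]
  · exact HasDerivAt.of_local_left_inverse e.symm.continuous.continuousAt (hasDerivAt_liftMap a _)
      (hpos _).ne' (Filter.Eventually.of_forall hr)

/-- The transfer operator of the circle map with lift `liftMap a`, acting on periodic functions,
in terms of the inverse `G` of the lift. -/
noncomputable def transfer (a : ℝ) (G P : ℝ → ℝ) (y : ℝ) : ℝ :=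
  P (G y) / liftDeriv a (G y) + P (G (y + 1)) / liftDeriv a (G (y + 1))

lemma continuous_transfer {a : ℝ} (ha : a ∈ Set.Ioo (0:ℝ) (1 / 100)) {G P : ℝ → ℝ}
    (hG : Continuous G) (hP : Continuous P) : Continuous (transfer a G P) := by
  have hpos : ∀ x, liftDeriv a x ≠ 0 := fun x => by linarith [le_liftDeriv ha x]
  have h : Continuous fun y => P (G y) / liftDeriv a (G y) :=
    (hP.comp hG).div ((continuous_liftDeriv a).comp hG) fun _ => hpos _
  exact h.add (h.comp (continuous_add_const 1))

lemma periodic_transfer {a : ℝ} {G P : ℝ → ℝ} (hG : ∀ y, G (y + 2) = G y + 1)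
    (hP : Function.Periodic P 1) : Function.Periodic (transfer a G P) 1 := by
  intro y
  simp only [transfer, add_assoc, one_add_one_eq_two, hG, hP _, liftDeriv_add_one]
  ring

lemma transfer_sub (a : ℝ) (G P Q : ℝ → ℝ) (y : ℝ) :
    transfer a G (fun x => P x - Q x) y = transfer a G P y - transfer a G Q y := by
  simp only [transfer]
  ring

lemma integral_comp_liftMap_mul {a : ℝ} (ha : a ∈ Set.Ioo (0:ℝ) (1 / 100)) {G P ψ : ℝ → ℝ}
    (hGl : ∀ x, G (liftMap a x) = x) (hG : Continuous G) (hP : Continuous P)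
    (hψ : Continuous ψ) (pψ : Function.Periodic ψ 1) :
    ∫ x in (0:ℝ)..1, ψ (liftMap a x) * P x = ∫ y in (0:ℝ)..1, ψ y * transfer a G P y := by
  have hpos : ∀ x, liftDeriv a x ≠ 0 := fun x => by linarith [le_liftDeriv ha x]
  let w : ℝ → ℝ := fun y => ψ y * (P (G y) / liftDeriv a (G y))
  have hw : Continuous w :=
    hψ.mul ((hP.comp hG).div ((continuous_liftDeriv a).comp hG) fun _ => hpos _)
  have h := intervalIntegral.integral_comp_mul_deriv (a := 0) (b := 1)
    (fun x _ => hasDerivAt_liftMap a x) (continuous_liftDeriv a).continuousOn hw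
  have hl : ∀ x, (w ∘ liftMap a) x * liftDeriv a x = ψ (liftMap a x) * P x := by
    intro x
    have := hpos x
    simp only [w, Function.comp, hGl]
    field_simp
  have e0 : liftMap a 0 = 0 := by simp [liftMap]
  have e1 : liftMap a 1 = 2 := by simpa [e0] using liftMap_add_one a 0
  simp only [hl, e0, e1] at h
  have hs := intervalIntegral.integral_comp_add_right (a := 0) (b := 1) w 1
  rw [zero_add, one_add_one_eq_two] at hs
  have hw₁ : Continuous fun y => w (y + 1) := hw.comp (continuous_add_const 1)
  rw [h, ← intervalIntegral.integral_add_adjacent_intervals (hw.intervalIntegrable 0 1)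
    (hw.intervalIntegrable 1 2), ← hs, ← intervalIntegral.integral_add
    (hw.intervalIntegrable _ _) (hw₁.intervalIntegrable _ _)]
  refine intervalIntegral.integral_congr fun y _ => ?_
  simp only [w, transfer, pψ y]
  ring

lemma exists_hasDerivAt_transfer {a : ℝ} (ha : a ∈ Set.Ioo (0:ℝ) (1 / 100)) {G D D' : ℝ → ℝ}
    (hG : ∀ y, HasDerivAt G (liftDeriv a (G y))⁻¹ y) (hD : ∀ x, HasDerivAt D (D' x) x)
    {M : ℝ} (hM : ∀ x, |D x| ≤ M) (hM' : ∀ x, |D' x| ≤ M) :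
    ∃ T : ℝ → ℝ, (∀ y, HasDerivAt (transfer a G D) (T y) y) ∧ ∀ y, |T y| ≤ 7 / 10 * M := by
  have hM0 : 0 ≤ M := (abs_nonneg _).trans (hM 0)
  let F₂ : ℝ → ℝ := fun x => a * (-Real.sin (2 * Real.pi * x) * (2 * Real.pi) * (2 * Real.pi))
  let q : ℝ → ℝ := fun x => (D' x * liftDeriv a x - D x * F₂ x) / liftDeriv a x ^ 2
  have hlow : ∀ x, 1.9 ≤ liftDeriv a x := le_liftDeriv ha
  have hpos : ∀ x, 0 < liftDeriv a x := fun x => by linarith [hlow x]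
  have hq : ∀ y, HasDerivAt (fun y => D (G y) / liftDeriv a (G y))
      (q (G y) * (liftDeriv a (G y))⁻¹) y := fun y =>
    HasDerivAt.comp y ((hD (G y)).div (hasDerivAt_liftDeriv a (G y)) (hpos _).ne') (hG y)
  have hb : ∀ x, |q x * (liftDeriv a x)⁻¹| ≤ 7 / 20 * M := by
    intro x
    have hx := hpos x
    have hl := hlow x
    have h1 : |D' x * liftDeriv a x - D x * F₂ x| ≤ M * liftDeriv a x + M * 0.4 := by
      refine (abs_sub _ _).trans ?_
      rw [abs_mul, abs_mul, abs_of_pos hx]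
      have := abs_deriv_liftDeriv_le ha x
      gcongr
      exacts [hM' x, hM x]
    have hrw : q x * (liftDeriv a x)⁻¹
        = (D' x * liftDeriv a x - D x * F₂ x) / liftDeriv a x ^ 3 := by
      simp only [q]
      field_simp
    rw [hrw, abs_div, abs_of_pos (by positivity : 0 < liftDeriv a x ^ 3),
      div_le_iff₀ (by positivity)]
    refine h1.trans ?_
    have h3 : liftDeriv a x + 0.4 ≤ 7 / 20 * liftDeriv a x ^ 3 := by
      nlinarith [mul_self_nonneg (liftDeriv a x - 1.9), mul_nonneg (sub_nonneg.2 hl) (sub_nonneg.2 hl),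
        mul_nonneg (mul_nonneg (sub_nonneg.2 hl) (sub_nonneg.2 hl)) (sub_nonneg.2 hl)]
    nlinarith [mul_le_mul_of_nonneg_left h3 hM0]
  refine ⟨fun y => q (G y) * (liftDeriv a (G y))⁻¹ + q (G (y + 1)) * (liftDeriv a (G (y + 1)))⁻¹,
    fun y => (hq y).add ((hq (y + 1)).comp_add_const y 1), fun y => ?_⟩
  exact (abs_add_le _ _).trans (by linarith [hb (G y), hb (G (y + 1))])

lemma exists_abs_le_abs_of_periodic {g : ℝ → ℝ} (hg : Continuous g) (pg : Function.Periodic g 1) :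
    ∃ x₀, ∀ x, |g x| ≤ |g x₀| := by
  have pabs : Function.Periodic (fun x => |g x|) 1 := fun x => by simp only [pg x]
  obtain ⟨_, ⟨x₀, rfl⟩, hx₀⟩ := (pabs.compact_of_continuous one_ne_zero hg.abs).exists_isGreatest
    (Set.range_nonempty _)
  exact ⟨x₀, fun x => hx₀ ⟨x, rfl⟩⟩

lemma periodic_of_hasDerivAt {g g' : ℝ → ℝ} (hg : ∀ x, HasDerivAt g (g' x) x)
    (pg : Function.Periodic g 1) : Function.Periodic g' 1 := by
  intro x
  have h := (hg (x + 1)).comp_add_const x 1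
  simp only [pg _] at h
  exact h.unique (hg x)

lemma periodic_apply_fract {g : ℝ → ℝ} (pg : Function.Periodic g 1) (x : ℝ) :
    g (Int.fract x) = g x := by
  have h := pg.sub_int_mul_eq (x := x) ⌊x⌋
  rwa [mul_one] at h

lemma eq_zero_of_integral_sq_eq_zero {g : ℝ → ℝ} (hg : Continuous g) (pg : Function.Periodic g 1)
    (h : ∫ x in (0:ℝ)..1, g x ^ 2 = 0) (x : ℝ) : g x = 0 := by
  by_contra hx
  have hg2 : Continuous fun x => g x ^ 2 := hg.pow 2
  refine (intervalIntegral.integral_pos zero_lt_one hg2.continuousOn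
    (fun _ _ => sq_nonneg _) ⟨Int.fract x, ⟨Int.fract_nonneg x, (Int.fract_lt_one x).le⟩, ?_⟩).ne' h
  rw [periodic_apply_fract pg]
  positivity

lemma integral_mul_sub {u v w : ℝ → ℝ} (hu : Continuous u) (hv : Continuous v)
    (hw : Continuous w) : ∫ x in (0:ℝ)..1, u x * (v x - w x)
      = (∫ x in (0:ℝ)..1, u x * v x) - ∫ x in (0:ℝ)..1, u x * w x := by
  simp only [mul_sub]
  exact intervalIntegral.integral_sub ((hu.mul hv).intervalIntegrable _ _)
    ((hu.mul hw).intervalIntegrable _ _)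

lemma exists_eq_zero_of_integral_eq_zero {D : ℝ → ℝ} (hD : Continuous D)
    (h : ∫ x in (0:ℝ)..1, D x = 0) : ∃ c ∈ Set.Ioo (0:ℝ) 1, D c = 0 := by
  have hA : ∀ x, HasDerivAt (fun x => ∫ s in (0:ℝ)..x, D s) (D x) x := fun x =>
    (hD.integral_hasStrictDerivAt 0 x).hasDerivAt
  obtain ⟨c, hc, hc'⟩ := exists_hasDerivAt_eq_slope _ D (zero_lt_one' ℝ)
    (fun x _ => (hA x).continuousAt.continuousWithinAt) fun x _ => hA x
  exact ⟨c, hc, by simpa [h] using hc'⟩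

lemma abs_le_of_integral_eq_zero {D D' : ℝ → ℝ} {M : ℝ} (hD : ∀ x, HasDerivAt D (D' x) x)
    (pD : Function.Periodic D 1) (h : ∫ x in (0:ℝ)..1, D x = 0) (hM : ∀ x, |D' x| ≤ M) (x : ℝ) :
    |D x| ≤ M := by
  obtain ⟨c, hc, hDc⟩ := exists_eq_zero_of_integral_eq_zero
    (continuous_iff_continuousAt.2 fun x => (hD x).continuousAt) h
  have hM0 : 0 ≤ M := (abs_nonneg _).trans (hM 0)
  have hb := abs_sub_le_of_hasDerivAt hD hM (Int.fract x) c
  have h1 : |Int.fract x - c| ≤ 1 := abs_le.2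
    ⟨by linarith [Int.fract_nonneg x, hc.2], by linarith [Int.fract_lt_one x, hc.1]⟩
  rw [hDc, sub_zero, periodic_apply_fract pD] at hb
  exact hb.trans (mul_le_of_le_one_right hM0 h1)

lemma eq_of_forall_integral_mul_eq {u v : ℝ → ℝ} (hu : Continuous u) (hv : Continuous v)
    (pu : Function.Periodic u 1) (pv : Function.Periodic v 1)
    (h : ∀ ψ : ℝ → ℝ, Continuous ψ → Function.Periodic ψ 1 →
      ∫ x in (0:ℝ)..1, ψ x * u x = ∫ x in (0:ℝ)..1, ψ x * v x) : u = v := by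
  have hw : Continuous fun x => u x - v x := hu.sub hv
  have pw : Function.Periodic (fun x => u x - v x) 1 := fun x => by simp only [pu x, pv x]
  have h0 : ∫ x in (0:ℝ)..1, (u x - v x) ^ 2 = 0 := by
    simp only [sq]
    rw [integral_mul_sub hw hu hv, h _ hw pw, sub_self]
  exact funext fun x => sub_eq_zero.1 (eq_zero_of_integral_sq_eq_zero hw pw h0 x)

lemma abs_sub_le_of_stationary {a : ℝ} (ha : a ∈ Set.Ioo (0:ℝ) (1 / 100))
    {G P P₁ P₂ P₃ Q Q₁ : ℝ → ℝ} {K ε : ℝ}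
    (hG : ∀ y, HasDerivAt G (liftDeriv a (G y))⁻¹ y)
    (h₁ : ∀ x, HasDerivAt P (P₁ x) x) (h₂ : ∀ x, HasDerivAt P₁ (P₂ x) x)
    (h₃ : ∀ x, HasDerivAt P₂ (P₃ x) x) (hK : ∀ x, |P₃ x| ≤ K) (pP : Function.Periodic P 1)
    (hQ : ∀ x, HasDerivAt Q (Q₁ x) x) (cQ : Continuous Q₁) (pQ : Function.Periodic Q 1)
    (hint : ∫ x in (0:ℝ)..1, Q x - P x = 0) (hP : transfer a G P = P) (hε : 0 < ε)
    (hQε : windowAverage ε (transfer a G Q) = Q) (x : ℝ) : |Q x - P x| ≤ 4 * K * ε ^ 2 := by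
  have hD : ∀ x, HasDerivAt (fun x => Q x - P x) (Q₁ x - P₁ x) x := fun x => (hQ x).sub (h₁ x)
  have pD : Function.Periodic (fun x => Q x - P x) 1 := fun x => by simp only [pP x, pQ x]
  have cP₁ : Continuous P₁ := continuous_iff_continuousAt.2 fun x => (h₂ x).continuousAt
  have cQ₀ : Continuous Q := continuous_iff_continuousAt.2 fun x => (hQ x).continuousAt
  have cG : Continuous G := continuous_iff_continuousAt.2 fun x => (hG x).continuousAt
  obtain ⟨x₀, hx₀⟩ := exists_abs_le_abs_of_periodic (cQ.sub cP₁) (periodic_of_hasDerivAt hD pD)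
  have hM := abs_le_of_integral_eq_zero hD pD hint hx₀
  obtain ⟨T, hT, hTb⟩ := exists_hasDerivAt_transfer ha hG hD hM hx₀
  have hQ₁ : Q₁ x₀ = (transfer a G Q (x₀ + ε) - transfer a G Q (x₀ - ε)) / (2 * ε) := by
    have h := hasDerivAt_windowAverage (continuous_transfer ha cG cQ₀) ε x₀
    rw [hQε] at h
    exact (hQ x₀).unique h
  have hsplit : Q₁ x₀ - P₁ x₀
      = (transfer a G (fun x => Q x - P x) (x₀ + ε)
          - transfer a G (fun x => Q x - P x) (x₀ - ε)) / (2 * ε)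
        + ((P (x₀ + ε) - P (x₀ - ε)) / (2 * ε) - P₁ x₀) := by
    rw [hQ₁, transfer_sub, transfer_sub, hP]
    ring
  have hb₁ : |(transfer a G (fun x => Q x - P x) (x₀ + ε)
      - transfer a G (fun x => Q x - P x) (x₀ - ε)) / (2 * ε)| ≤ 7 / 10 * |Q₁ x₀ - P₁ x₀| := by
    have h := abs_sub_le_of_hasDerivAt hT hTb (x₀ + ε) (x₀ - ε)
    rw [show x₀ + ε - (x₀ - ε) = 2 * ε by ring] at h
    rw [abs_div, div_le_iff₀ (by positivity)]
    exact h
  have hb₂ := abs_symmetric_difference_sub_deriv_le h₁ h₂ h₃ hK hε x₀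
  have hle := abs_add_le ((transfer a G (fun x => Q x - P x) (x₀ + ε)
      - transfer a G (fun x => Q x - P x) (x₀ - ε)) / (2 * ε))
      ((P (x₀ + ε) - P (x₀ - ε)) / (2 * ε) - P₁ x₀)
  rw [← hsplit] at hle
  have hKε : 0 ≤ K * ε ^ 2 := (abs_nonneg _).trans hb₂
  exact (hM x).trans (by simp only [Pi.sub_apply] at *; linarith)

lemma abs_integral_mul_le {φ D : ℝ → ℝ} {B : ℝ} (hD : Continuous D) (hB : ∀ x, |φ x| ≤ B) :
    |∫ x in (0:ℝ)..1, φ x * D x| ≤ B * ∫ x in (0:ℝ)..1, |D x| := by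
  have hBD : Continuous fun x => B * |D x| := by fun_prop
  rw [← intervalIntegral.integral_const_mul]
  rw [← Real.norm_eq_abs]
  refine intervalIntegral.norm_integral_le_of_norm_le zero_le_one
    (Filter.Eventually.of_forall fun x _ => ?_) (hBD.intervalIntegrable _ _)
  rw [Real.norm_eq_abs, abs_mul]
  exact mul_le_mul_of_nonneg_right (hB x) (abs_nonneg _)

/-- Testing the stationarity equations against `P₂ = P''` bounds the distance from below. -/
lemma integral_sq_le_of_stationary {a : ℝ} {P P₁ P₂ P₃ Q : ℝ → ℝ} {K B ε : ℝ}
    (h₁ : ∀ x, HasDerivAt P (P₁ x) x) (h₂ : ∀ x, HasDerivAt P₁ (P₂ x) x)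
    (h₃ : ∀ x, HasDerivAt P₂ (P₃ x) x) (hK : ∀ x, |P₃ x| ≤ K) (pP : Function.Periodic P 1)
    (hB : ∀ x, |P₂ x| ≤ B) (hQ : Continuous Q) (hε : 0 < ε)
    (hP : ∀ ψ : ℝ → ℝ, Continuous ψ → Function.Periodic ψ 1 →
      ∫ x in (0:ℝ)..1, ψ (liftMap a x) * P x = ∫ x in (0:ℝ)..1, ψ x * P x)
    (hQε : ∀ ψ : ℝ → ℝ, Continuous ψ → Function.Periodic ψ 1 →
      ∫ x in (0:ℝ)..1, windowAverage ε ψ (liftMap a x) * Q x = ∫ x in (0:ℝ)..1, ψ x * Q x) :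
    ε ^ 2 / 6 * (∫ x in (0:ℝ)..1, P₂ x ^ 2)
      ≤ 2 * B * (∫ x in (0:ℝ)..1, |Q x - P x|) + B * K * ε ^ 3 := by
  have cP : Continuous P := continuous_iff_continuousAt.2 fun x => (h₁ x).continuousAt
  have c₂ : Continuous P₂ := continuous_iff_continuousAt.2 fun x => (h₃ x).continuousAt
  have p₂ : Function.Periodic P₂ 1 := periodic_of_hasDerivAt h₂ (periodic_of_hasDerivAt h₁ pP)
  have cW := continuous_windowAverage c₂ ε
  have cWF : Continuous fun x => windowAverage ε P₂ (liftMap a x) := cW.comp (continuous_liftMap a)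
  have cD : Continuous fun x => Q x - P x := hQ.sub cP
  have cA := continuous_windowAverage cP ε
  have cR : Continuous fun x => windowAverage ε P x - P x - ε ^ 2 / 6 * P₂ x := by fun_prop
  have e₁ := hQε P₂ c₂ p₂
  have e₂ := hP _ cW (periodic_windowAverage p₂ ε)
  rw [integral_windowAverage_mul c₂ cP p₂ pP] at e₂
  have s₁ := integral_mul_sub c₂ hQ cP
  have s₂ := integral_mul_sub cWF hQ cP
  have s₃ := integral_mul_sub c₂ cA cP
  have s₄ := integral_mul_sub c₂ (cA.sub cP)
    (show Continuous fun x => ε ^ 2 / 6 * P₂ x by fun_prop)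
  have s₅ : ∫ x in (0:ℝ)..1, P₂ x * (ε ^ 2 / 6 * P₂ x)
      = ε ^ 2 / 6 * ∫ x in (0:ℝ)..1, P₂ x ^ 2 := by
    rw [← intervalIntegral.integral_const_mul]
    exact intervalIntegral.integral_congr fun x _ => by ring
  have b₁ := abs_le.1 (abs_integral_mul_le cD hB)
  have b₂ := abs_le.1 (abs_integral_mul_le (φ := fun x => windowAverage ε P₂ (liftMap a x)) cD
    fun x => abs_windowAverage_le hB hε _)
  have b₃ := abs_le.1 (abs_integral_mul_le cR hB)
  have b₄ : ∫ x in (0:ℝ)..1, |windowAverage ε P x - P x - ε ^ 2 / 6 * P₂ x| ≤ K * ε ^ 3 := by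
    have := intervalIntegral.integral_mono_on (μ := volume) zero_le_one (cR.abs.intervalIntegrable 0 1)
      (intervalIntegrable_const (c := K * ε ^ 3))
      fun x _ => abs_windowAverage_sub_sub_le h₁ h₂ h₃ hK hε x
    simpa using this
  have b₅ := mul_le_mul_of_nonneg_left b₄ ((abs_nonneg _).trans (hB 0))
  simp only [Pi.sub_apply] at *
  linarith [b₁.1, b₁.2, b₂.1, b₂.2, b₃.1, b₃.2]

lemma integral_sq_second_deriv_pos {P P₁ P₂ : ℝ → ℝ}
    (h₁ : ∀ x, HasDerivAt P (P₁ x) x) (h₂ : ∀ x, HasDerivAt P₁ (P₂ x) x) (c₂ : Continuous P₂)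
    (pP : Function.Periodic P 1) (hne : ∃ x y, P x ≠ P y) : 0 < ∫ x in (0:ℝ)..1, P₂ x ^ 2 := by
  have p₁ := periodic_of_hasDerivAt h₁ pP
  have p₂ := periodic_of_hasDerivAt h₂ p₁
  have c₁ : Continuous P₁ := continuous_iff_continuousAt.2 fun x => (h₂ x).continuousAt
  have hint : ∀ {g g' : ℝ → ℝ}, (∀ x, HasDerivAt g (g' x) x) → Continuous g' →
      Function.Periodic g 1 → ∫ x in (0:ℝ)..1, g' x = 0 := by
    intro g g' hg hg' pg
    rw [intervalIntegral.integral_eq_sub_of_hasDerivAt (fun x _ => hg x)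
      (hg'.intervalIntegrable _ _)]
    simpa [sub_eq_zero] using pg 0
  refine (intervalIntegral.integral_nonneg zero_le_one fun _ _ => sq_nonneg _).lt_of_ne' fun h0 => ?_
  have hzero := eq_zero_of_integral_sq_eq_zero c₂ p₂ h0
  have hP₁ : ∀ x, P₁ x = 0 := fun x => abs_nonpos_iff.1 <|
    abs_le_of_integral_eq_zero h₂ p₁ (hint h₁ c₁ pP) (fun x => by rw [hzero x, abs_zero]) x
  obtain ⟨x, y, hxy⟩ := hne
  have := abs_sub_le_of_hasDerivAt (K := 0) h₁ (fun x => by rw [hP₁ x, abs_zero]) x y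
  rw [zero_mul, abs_nonpos_iff, sub_eq_zero] at this
  exact hxy this

lemma integral_addCircle_eq {φ : AddCircle (1:ℝ) → ℝ} {g : ℝ → ℝ} (h : ∀ x : ℝ, φ x = g x) :
    ∫ z, φ z = ∫ x in (0:ℝ)..1, g x := by
  have e := AddCircle.intervalIntegral_preimage 1 0 φ
  rw [zero_add] at e
  simp only [← e, h]

lemma continuous_addCircle {X : Type*} [TopologicalSpace X] {φ : AddCircle (1:ℝ) → X} {g : ℝ → X}
    (hg : Continuous g) (h : ∀ x : ℝ, φ x = g x) : Continuous φ :=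
  continuous_coinduced_dom.2 (hg.congr fun x => (h x).symm)

/-- A continuous periodic function descends to a continuous function on the circle. -/
lemma exists_continuous_addCircle {ψ : ℝ → ℝ} (hψ : Continuous ψ) (pψ : Function.Periodic ψ 1) :
    ∃ Ψ : AddCircle (1:ℝ) → ℝ, Continuous Ψ ∧ ∀ x : ℝ, Ψ x = ψ x :=
  ⟨pψ.lift, continuous_addCircle hψ pψ.lift_coe, pψ.lift_coe⟩

lemma integral_withDensity_addCircle {ρ Ψ : AddCircle (1:ℝ) → ℝ} {P ψ : ℝ → ℝ}
    (hP : Continuous P) (hρ : ∀ x : ℝ, ρ x = P x) (h0 : ∀ z, 0 ≤ ρ z) (hΨ : ∀ x : ℝ, Ψ x = ψ x) :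
    ∫ z, Ψ z ∂(volume.withDensity fun z => ENNReal.ofReal (ρ z))
      = ∫ x in (0:ℝ)..1, ψ x * P x := by
  have cρ := continuous_addCircle hP hρ
  rw [integral_withDensity_eq_integral_toReal_smul cρ.measurable.ennreal_ofReal
    (Filter.Eventually.of_forall fun _ => ENNReal.ofReal_lt_top)]
  refine integral_addCircle_eq fun x => ?_
  rw [ENNReal.toReal_ofReal (h0 _), smul_eq_mul, hρ, hΨ, mul_comm]

lemma integral_comp_liftMap_of_map_eq {a : ℝ} {f : AddCircle (1:ℝ) → AddCircle (1:ℝ)}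
    (hf : ∀ x : ℝ, f x = (liftMap a x : ℝ)) {ρ : AddCircle (1:ℝ) → ℝ} {P : ℝ → ℝ}
    (hP : Continuous P) (hρ : ∀ x : ℝ, ρ x = P x) (h0 : ∀ z, 0 ≤ ρ z)
    (hinv : Measure.map f (volume.withDensity fun z => ENNReal.ofReal (ρ z))
      = volume.withDensity fun z => ENNReal.ofReal (ρ z))
    {ψ : ℝ → ℝ} (hψ : Continuous ψ) (pψ : Function.Periodic ψ 1) :
    ∫ x in (0:ℝ)..1, ψ (liftMap a x) * P x = ∫ x in (0:ℝ)..1, ψ x * P x := by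
  obtain ⟨Ψ, cΨ, hΨ⟩ := exists_continuous_addCircle hψ pψ
  have cf : Continuous f :=
    continuous_addCircle ((AddCircle.continuous_mk' 1).comp (continuous_liftMap a)) hf
  rw [← integral_withDensity_addCircle hP hρ h0 hΨ, ← hinv,
    integral_map cf.aemeasurable cΨ.aestronglyMeasurable]
  exact (integral_withDensity_addCircle hP hρ h0 fun x => by rw [hf, hΨ]).symm

lemma integral_windowAverage_comp_liftMap_of_map_eq {a : ℝ}
    {f : AddCircle (1:ℝ) → AddCircle (1:ℝ)} (hf : ∀ x : ℝ, f x = (liftMap a x : ℝ))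
    {ρ : AddCircle (1:ℝ) → ℝ} {P : ℝ → ℝ} {ε : ℝ} (hε : 0 < ε)
    (hP : Continuous P) (hρ : ∀ x : ℝ, ρ x = P x) (h0 : ∀ z, 0 ≤ ρ z)
    (hinv : Measure.map (fun p : AddCircle (1:ℝ) × AddCircle (1:ℝ) => p.1 + p.2)
            ((Measure.map f (volume.withDensity (fun z => ENNReal.ofReal (ρ z)))).prod
              (Measure.map (fun x : ℝ => (x : AddCircle (1:ℝ)))
                ((ENNReal.ofReal (2*ε))⁻¹ • volume.restrict (Set.Icc (-ε) ε)))) =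
          volume.withDensity (fun z => ENNReal.ofReal (ρ z)))
    {ψ : ℝ → ℝ} (hψ : Continuous ψ) (pψ : Function.Periodic ψ 1) :
    ∫ x in (0:ℝ)..1, windowAverage ε ψ (liftMap a x) * P x = ∫ x in (0:ℝ)..1, ψ x * P x := by
  obtain ⟨Ψ, cΨ, hΨ⟩ := exists_continuous_addCircle hψ pψ
  obtain ⟨W, cW, hW⟩ := exists_continuous_addCircle (continuous_windowAverage hψ ε)
    (periodic_windowAverage pψ ε)
  have cf : Continuous f :=
    continuous_addCircle ((AddCircle.continuous_mk' 1).comp (continuous_liftMap a)) hf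
  have cmk : Continuous fun x : ℝ => (x : AddCircle (1:ℝ)) := AddCircle.continuous_mk' 1
  have cρ := continuous_addCircle hP hρ
  have : IsFiniteMeasure (volume.withDensity fun z => ENNReal.ofReal (ρ z)) :=
    isFiniteMeasure_withDensity_ofReal
      (cρ.integrable_of_hasCompactSupport (HasCompactSupport.of_compactSpace _)).2
  have : IsFiniteMeasure ((ENNReal.ofReal (2*ε))⁻¹ • volume.restrict (Set.Icc (-ε) ε)) :=
    Measure.smul_finite _ (by simpa using hε)
  have cadd : Continuous fun p : AddCircle (1:ℝ) × AddCircle (1:ℝ) => Ψ (p.1 + p.2) := by fun_prop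
  rw [← integral_withDensity_addCircle hP hρ h0 hΨ, ← hinv,
    integral_map (by fun_prop) cΨ.aestronglyMeasurable, integral_prod _
      (cadd.integrable_of_hasCompactSupport (HasCompactSupport.of_compactSpace _))]
  have hinner : ∀ z : AddCircle (1:ℝ), ∫ w, Ψ (z + w) ∂(Measure.map
      (fun x : ℝ => (x : AddCircle (1:ℝ)))
        ((ENNReal.ofReal (2*ε))⁻¹ • volume.restrict (Set.Icc (-ε) ε))) = W z := by
    intro z
    have cz : Continuous fun w => Ψ (z + w) := by fun_prop
    rw [integral_map cmk.aemeasurable cz.aestronglyMeasurable,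
      integral_smul_measure, ENNReal.toReal_inv, ENNReal.toReal_ofReal (by positivity),
      integral_Icc_eq_integral_Ioc, ← intervalIntegral.integral_of_le (by linarith)]
    obtain ⟨y, rfl⟩ := QuotientAddGroup.mk_surjective z
    refine Eq.trans ?_ (hW y).symm
    rw [windowAverage, smul_eq_mul]
    simp only [← hΨ]
    rfl
  simp only [hinner]
  rw [integral_map cf.aemeasurable cW.aestronglyMeasurable]
  exact (integral_withDensity_addCircle hP hρ h0 fun x => by rw [hf, hW]).symm

/-- Main rigorous result of Section 2.1: for sufficiently small `a ∈ (0, 1/(2π))`,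
if `f` is the circle map induced by `F_a(x) = 2x + a sin(2πx)`, `ρ₀` a nonconstant `C³`
invariant probability density of `f` on `ℝ/ℤ`, then there are `c₁, c₂, ε₁ > 0` such that
for `0 < ε < ε₁` every `C¹` invariant probability density `ρ_ε` of the noisy dynamics
(pushforward by `f` followed by convolution with the projected uniform measure on `[−ε,ε]`)
satisfies `c₁ ε² ≤ ∫ |ρ_ε − ρ₀| ≤ c₂ ε²`. -/
theorem stmt11 :
    ∃ a₀ ∈ Set.Ioo (0:ℝ) (1/(2*Real.pi)), ∀ a ∈ Set.Ioo (0:ℝ) a₀,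
    ∀ f : AddCircle (1:ℝ) → AddCircle (1:ℝ),
      (∀ x : ℝ, f (x : AddCircle (1:ℝ)) =
        ((2*x + a*Real.sin (2*Real.pi*x) : ℝ) : AddCircle (1:ℝ))) →
    ∀ ρ₀ : AddCircle (1:ℝ) → ℝ, ∀ P₀ : ℝ → ℝ,
      ContDiff ℝ 3 P₀ → Function.Periodic P₀ 1 →
      (∀ x : ℝ, ρ₀ (x : AddCircle (1:ℝ)) = P₀ x) →
      (∃ u v : AddCircle (1:ℝ), ρ₀ u ≠ ρ₀ v) →
      (∀ z : AddCircle (1:ℝ), 0 ≤ ρ₀ z) →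
      (∫ z : AddCircle (1:ℝ), ρ₀ z = 1) →
      (Measure.map f (volume.withDensity (fun z => ENNReal.ofReal (ρ₀ z))) =
        volume.withDensity (fun z => ENNReal.ofReal (ρ₀ z))) →
    ∃ c₁ > (0:ℝ), ∃ c₂ > (0:ℝ), ∃ ε₁ > (0:ℝ), ∀ ε ∈ Set.Ioo (0:ℝ) ε₁,
      ∀ ρε : AddCircle (1:ℝ) → ℝ, ∀ Pε : ℝ → ℝ,
        ContDiff ℝ 1 Pε → Function.Periodic Pε 1 →
        (∀ x : ℝ, ρε (x : AddCircle (1:ℝ)) = Pε x) →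
        (∀ z : AddCircle (1:ℝ), 0 ≤ ρε z) →
        (∫ z : AddCircle (1:ℝ), ρε z = 1) →
        -- invariance of ρε under push-forward by f followed by convolution with the
        -- noise measure ν_ε (the projection to ℝ/ℤ of the uniform measure on [−ε, ε])
        (Measure.map (fun p : AddCircle (1:ℝ) × AddCircle (1:ℝ) => p.1 + p.2)
            ((Measure.map f (volume.withDensity (fun z => ENNReal.ofReal (ρε z)))).prod
              (Measure.map (fun x : ℝ => (x : AddCircle (1:ℝ)))
                ((ENNReal.ofReal (2*ε))⁻¹ • volume.restrict (Set.Icc (-ε) ε)))) =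
          volume.withDensity (fun z => ENNReal.ofReal (ρε z))) →
        c₁ * ε^2 ≤ (∫ z : AddCircle (1:ℝ), |ρε z - ρ₀ z|) ∧
          (∫ z : AddCircle (1:ℝ), |ρε z - ρ₀ z|) ≤ c₂ * ε^2 := by
  refine ⟨1 / 100, ⟨by norm_num, ?_⟩, ?_⟩
  · rw [div_lt_div_iff₀ (by norm_num) (by positivity)]
    linarith [Real.pi_lt_d2]
  intro a ha f hf ρ₀ P₀ hP₀ pP₀ hρ₀ hne h0 hint hinv
  have h₁ : ∀ x, HasDerivAt P₀ (deriv P₀ x) x := fun x =>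
    (hP₀.differentiable (by norm_num) x).hasDerivAt
  have hd₁ : ContDiff ℝ 2 (deriv P₀) := hP₀.deriv'
  have h₂ : ∀ x, HasDerivAt (deriv P₀) (deriv (deriv P₀) x) x := fun x =>
    (hd₁.differentiable (by norm_num) x).hasDerivAt
  have hd₂ : ContDiff ℝ 1 (deriv (deriv P₀)) := hd₁.deriv'
  have h₃ : ∀ x, HasDerivAt (deriv (deriv P₀)) (deriv (deriv (deriv P₀)) x) x := fun x =>
    (hd₂.differentiable (by norm_num) x).hasDerivAt
  have p₂ := periodic_of_hasDerivAt h₂ (periodic_of_hasDerivAt h₁ pP₀)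
  obtain ⟨xB, hB⟩ := exists_abs_le_abs_of_periodic hd₂.continuous p₂
  obtain ⟨xK, hK⟩ := exists_abs_le_abs_of_periodic (hd₂.continuous_deriv le_rfl)
    (periodic_of_hasDerivAt h₃ p₂)
  have hne' : ∃ x y, P₀ x ≠ P₀ y := by
    obtain ⟨u, v, huv⟩ := hne
    obtain ⟨x, rfl⟩ := QuotientAddGroup.mk_surjective u
    obtain ⟨y, rfl⟩ := QuotientAddGroup.mk_surjective v
    exact ⟨x, y, fun h => huv ((hρ₀ x).trans (h.trans (hρ₀ y).symm))⟩
  have hS := integral_sq_second_deriv_pos h₁ h₂ hd₂.continuous pP₀ hne'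
  set S := ∫ x in (0:ℝ)..1, deriv (deriv P₀) x ^ 2
  set B := |deriv (deriv P₀) xB|
  set K := |deriv (deriv (deriv P₀)) xK|
  have hB0 : 0 ≤ B := abs_nonneg _
  have hK0 : 0 ≤ K := abs_nonneg _
  have weak₀ := fun ψ hψ pψ =>
    integral_comp_liftMap_of_map_eq (ψ := ψ) hf hP₀.continuous hρ₀ h0 hinv hψ pψ
  obtain ⟨G, hGl, hG2, hG⟩ := exists_inverse_liftMap ha
  have cG : Continuous G := continuous_iff_continuousAt.2 fun x => (hG x).continuousAt
  have hfix : transfer a G P₀ = P₀ :=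
    eq_of_forall_integral_mul_eq (continuous_transfer ha cG hP₀.continuous) hP₀.continuous
      (periodic_transfer hG2 pP₀) pP₀ fun ψ hψ pψ => by
        rw [← integral_comp_liftMap_mul ha hGl cG hP₀.continuous hψ pψ, weak₀ ψ hψ pψ]
  refine ⟨S / (24 * (B + 1)), by positivity, 4 * K + 1, by positivity, S / (12 * (B * K + 1)),
    by positivity, ?_⟩
  intro ε ⟨hε, hε₁⟩ ρε Pε hPε pPε hρε h0ε hintε hinvε
  have weakε := fun ψ hψ pψ =>
    integral_windowAverage_comp_liftMap_of_map_eq (ψ := ψ) hf hε hPε.continuous hρε h0ε hinvε hψ pψ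
  have hPε₁ : ∀ x, HasDerivAt Pε (deriv Pε x) x := fun x =>
    (hPε.differentiable one_ne_zero x).hasDerivAt
  have cT := continuous_transfer ha cG hPε.continuous
  have pT : Function.Periodic (transfer a G Pε) 1 := periodic_transfer hG2 pPε
  have hfixε : windowAverage ε (transfer a G Pε) = Pε :=
    eq_of_forall_integral_mul_eq (continuous_windowAverage cT ε) hPε.continuous
      (periodic_windowAverage pT ε) pPε fun ψ hψ pψ => by
        rw [← integral_windowAverage_mul hψ cT pψ pT, ← integral_comp_liftMap_mul ha hGl cG
          hPε.continuous (continuous_windowAverage hψ ε) (periodic_windowAverage pψ ε),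
          weakε ψ hψ pψ]
  have hzero : ∫ x in (0:ℝ)..1, Pε x - P₀ x = 0 := by
    rw [intervalIntegral.integral_sub (hPε.continuous.intervalIntegrable _ _)
      (hP₀.continuous.intervalIntegrable _ _), ← integral_addCircle_eq hρ₀,
      ← integral_addCircle_eq hρε, hint, hintε, sub_self]
  rw [integral_addCircle_eq (g := fun x => |Pε x - P₀ x|) fun x => by rw [hρε, hρ₀]]
  constructor
  · have h := integral_sq_le_of_stationary h₁ h₂ h₃ hK pP₀ hB hPε.continuous hε weak₀ weakε
    set I := ∫ x in (0:ℝ)..1, |Pε x - P₀ x|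
    have hI : 0 ≤ I := intervalIntegral.integral_nonneg zero_le_one fun _ _ => abs_nonneg _
    rw [lt_div_iff₀ (by positivity)] at hε₁
    have hcube : B * K * ε ^ 3 ≤ ε ^ 2 / 12 * S := by
      have : B * K * ε ≤ S / 12 := by nlinarith
      nlinarith [mul_le_mul_of_nonneg_left this (sq_nonneg ε)]
    rw [div_mul_eq_mul_div, div_le_iff₀ (by positivity)]
    nlinarith
  · have hb := abs_sub_le_of_stationary ha hG h₁ h₂ h₃ hK pP₀ hPε₁ (hPε.continuous_deriv le_rfl)
      pPε hzero hfix hε hfixε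
    have hD : Continuous fun x => |Pε x - P₀ x| := (hPε.continuous.sub hP₀.continuous).abs
    have hmono := intervalIntegral.integral_mono_on (μ := volume) zero_le_one
      (hD.intervalIntegrable 0 1) (intervalIntegrable_const (c := 4 * K * ε ^ 2)) fun x _ => hb x
    rw [intervalIntegral.integral_const, sub_zero, one_smul] at hmono
    nlinarith [sq_nonneg ε]
end

section
/- Let ρ₀ : ℝ → ℝ be the 1-periodic function with ρ₀(x) = 2/3 for x ∈ [0, 1/2] and ρ₀(x) = 4/3 for x ∈ (1/2, 1), and for ε > 0 define (G_ε ρ₀)(x) = (1/(2ε)) ∫_{x−ε}^{x+ε} ρ₀(y) dy. Then for every ε with 0 < ε < 1/4, ∫₀¹ |(G_ε ρ₀)(x) − ρ₀(x)| dx = (2/3) ε. -/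
/-- A function agreeing with `g` on the open interval `(a, b)` inherits interval integrability and
the value of the integral. -/
theorem intervalIntegrable_and_integral_eq_of_eqOn_Ioo {f g : ℝ → ℝ} {a b : ℝ} (hab : a ≤ b)
    (hg : Continuous g) (h : Set.EqOn f g (Set.Ioo a b)) :
    IntervalIntegrable f MeasureTheory.volume a b ∧ ∫ x in a..b, f x = ∫ x in a..b, g x := by
  constructor
  · refine (hg.intervalIntegrable a b).congr_uIoo ?_
    rw [Set.uIoo_of_le hab]
    exact h.symm
  · exact intervalIntegral.integral_congr_Ioo_of_le hab h

/-- The integral of a step function with a single jump at `j`. -/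
theorem integral_of_jump {f : ℝ → ℝ} {a j b p q : ℝ} (haj : a ≤ j) (hjb : j ≤ b)
    (hp : ∀ y ∈ Set.Ioo a j, f y = p) (hq : ∀ y ∈ Set.Ioo j b, f y = q) :
    ∫ y in a..b, f y = p * (j - a) + q * (b - j) := by
  obtain ⟨hl, hl'⟩ := intervalIntegrable_and_integral_eq_of_eqOn_Ioo haj continuous_const hp
  obtain ⟨hr, hr'⟩ := intervalIntegrable_and_integral_eq_of_eqOn_Ioo hjb continuous_const hq
  rw [← intervalIntegral.integral_add_adjacent_intervals hl hr, hl', hr']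
  simp only [intervalIntegral.integral_const, smul_eq_mul]
  ring

/-- The pointwise deviation of `f` from its average over `[x - ε, x + ε]`. -/
noncomputable def averagingError (f : ℝ → ℝ) (ε x : ℝ) : ℝ :=
  |((1/(2*ε)) * ∫ y in (x-ε)..(x+ε), f y) - f x|

theorem averagingError_periodic {f : ℝ → ℝ} {c : ℝ} (hf : Function.Periodic f c) (ε : ℝ) :
    Function.Periodic (averagingError f ε) c := by
  intro x
  have h : ∫ y in (x+c-ε)..(x+c+ε), f y = ∫ y in (x-ε)..(x+ε), f y := by
    have := intervalIntegral.integral_comp_add_right (a := x - ε) (b := x + ε) f c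
    simp only [hf _] at this
    rw [this]
    congr 1 <;> ring
  simp only [averagingError, h, hf x]

/-- Where `f` is constant on the `ε`-neighbourhood of `(a, b)`, averaging changes nothing. -/
theorem averagingError_integral_of_const {f : ℝ → ℝ} {ε a b p : ℝ} (hε : 0 < ε) (hab : a ≤ b)
    (hp : ∀ y ∈ Set.Ioo (a - ε) (b + ε), f y = p) :
    IntervalIntegrable (averagingError f ε) MeasureTheory.volume a b ∧
      ∫ x in a..b, averagingError f ε x = 0 := by
  have h : Set.EqOn (averagingError f ε) (fun _ => 0) (Set.Ioo a b) := by
    rintro x ⟨hx, hx'⟩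
    have hint : ∫ y in (x-ε)..(x+ε), f y = p * (x - (x - ε)) + p * (x + ε - x) :=
      integral_of_jump (by linarith) (by linarith)
        (fun y hy => hp y ⟨by linarith [hy.1], by linarith [hy.2]⟩)
        (fun y hy => hp y ⟨by linarith [hy.1], by linarith [hy.2]⟩)
    rw [averagingError, hint, hp x ⟨by linarith, by linarith⟩, abs_eq_zero]
    field_simp
    ring
  simpa using intervalIntegrable_and_integral_eq_of_eqOn_Ioo hab continuous_const h

/-- A jump from `p` to `q` contributes `|q - p| ε / 2` to the `L¹` averaging error. -/
theorem averagingError_integral_of_jump {f : ℝ → ℝ} {ε j p q : ℝ} (hε : 0 < ε)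
    (hp : ∀ y ∈ Set.Ioo (j - 2 * ε) j, f y = p) (hq : ∀ y ∈ Set.Ioo j (j + 2 * ε), f y = q) :
    IntervalIntegrable (averagingError f ε) MeasureTheory.volume (j - ε) (j + ε) ∧
      ∫ x in (j - ε)..(j + ε), averagingError f ε x = |q - p| * ε / 2 := by
  have hint : ∀ x ∈ Set.Ioo (j - ε) (j + ε),
      ∫ y in (x-ε)..(x+ε), f y = p * (j - (x - ε)) + q * (x + ε - j) := fun x hx =>
    integral_of_jump (by linarith [hx.2]) (by linarith [hx.1])
      (fun y hy => hp y ⟨by linarith [hx.1, hy.1], hy.2⟩)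
      (fun y hy => hq y ⟨hy.1, by linarith [hx.2, hy.2]⟩)
  have hl : Set.EqOn (averagingError f ε) (fun x => |q - p| / (2 * ε) * (x - (j - ε)))
      (Set.Ioo (j - ε) j) := by
    rintro x ⟨hx, hx'⟩
    have key : 1 / (2 * ε) * (p * (j - (x - ε)) + q * (x + ε - j)) - p
        = (q - p) * ((x - (j - ε)) / (2 * ε)) := by
      field_simp
      ring
    rw [averagingError, hint x ⟨hx, by linarith⟩, hp x ⟨by linarith, hx'⟩, key, abs_mul,
      abs_of_nonneg (div_nonneg (sub_nonneg.2 hx.le) (by linarith))]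
    ring
  have hr : Set.EqOn (averagingError f ε) (fun x => |q - p| / (2 * ε) * (j + ε - x))
      (Set.Ioo j (j + ε)) := by
    rintro x ⟨hx, hx'⟩
    have key : 1 / (2 * ε) * (p * (j - (x - ε)) + q * (x + ε - j)) - q
        = -((q - p) * ((j + ε - x) / (2 * ε))) := by
      field_simp
      ring
    rw [averagingError, hint x ⟨by linarith, hx'⟩, hq x ⟨hx, by linarith⟩, key, abs_neg, abs_mul,
      abs_of_nonneg (div_nonneg (sub_nonneg.2 hx'.le) (by linarith))]
    ring
  obtain ⟨il, el⟩ := intervalIntegrable_and_integral_eq_of_eqOn_Ioo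
    (show j - ε ≤ j by linarith) (by fun_prop) hl
  obtain ⟨ir, er⟩ := intervalIntegrable_and_integral_eq_of_eqOn_Ioo
    (show j ≤ j + ε by linarith) (by fun_prop) hr
  refine ⟨il.trans ir, ?_⟩
  rw [← intervalIntegral.integral_add_adjacent_intervals il ir, el, er,
    intervalIntegral.integral_const_mul, intervalIntegral.integral_const_mul,
    intervalIntegral.integral_comp_sub_right (fun x => x),
    intervalIntegral.integral_comp_sub_left (fun x => x), integral_id, integral_id]
  field_simp
  ring

/-- For the 1-periodic piecewise-constant density `ρ₀` (`2/3` on `[0,1/2]`, `4/3` on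
`(1/2,1)`) and `0 < ε < 1/4`, the smearing of the jumps by the averaging operator `G_ε`
gives exactly `‖G_ε ρ₀ − ρ₀‖₁ = (2/3) ε` over one period. -/
theorem stmt16 (ρ₀ : ℝ → ℝ) (hper : Function.Periodic ρ₀ 1)
    (hval : ∀ x ∈ Set.Ico (0:ℝ) 1, ρ₀ x = if x ≤ 1/2 then 2/3 else 4/3)
    (ε : ℝ) (hε : ε ∈ Set.Ioo (0:ℝ) (1/4)) :
    (∫ x in (0:ℝ)..1, |((1/(2*ε)) * ∫ y in (x-ε)..(x+ε), ρ₀ y) - ρ₀ x|) = (2/3) * ε := by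
  obtain ⟨hε0, hε4⟩ := hε
  have hlow : ∀ y ∈ Set.Ioo (0:ℝ) (1/2), ρ₀ y = 2/3 := fun y hy => by
    rw [hval y ⟨hy.1.le, by linarith [hy.2]⟩, if_pos hy.2.le]
  have hhigh : ∀ y ∈ Set.Ioo (1/2:ℝ) 1, ρ₀ y = 4/3 := fun y hy => by
    rw [hval y ⟨by linarith [hy.1], hy.2⟩, if_neg (not_le.2 hy.1)]
  have hneg : ∀ y ∈ Set.Ioo (-1/2:ℝ) 0, ρ₀ y = 4/3 := fun y hy => by
    rw [← hper y]
    exact hhigh _ ⟨by linarith [hy.1], by linarith [hy.2]⟩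
  obtain ⟨i₀, e₀⟩ := averagingError_integral_of_jump (f := ρ₀) (j := 0) hε0
    (fun y hy => hneg y ⟨by linarith [hy.1], hy.2⟩)
    (fun y hy => hlow y ⟨hy.1, by linarith [hy.2]⟩)
  obtain ⟨i₁, e₁⟩ := averagingError_integral_of_const (f := ρ₀) (a := 0 + ε) (b := 1/2 - ε) hε0
    (by linarith) (fun y hy => hlow y ⟨by linarith [hy.1], by linarith [hy.2]⟩)
  obtain ⟨i₂, e₂⟩ := averagingError_integral_of_jump (f := ρ₀) (j := 1/2) hε0
    (fun y hy => hlow y ⟨by linarith [hy.1], hy.2⟩)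
    (fun y hy => hhigh y ⟨hy.1, by linarith [hy.2]⟩)
  obtain ⟨i₃, e₃⟩ := averagingError_integral_of_const (f := ρ₀) (a := 1/2 + ε) (b := 0 - ε + 1) hε0
    (by linarith) (fun y hy => hhigh y ⟨by linarith [hy.1], by linarith [hy.2]⟩)
  have hshift := (averagingError_periodic hper ε).intervalIntegral_add_eq 0 (0 - ε)
  rw [← intervalIntegral.integral_add_adjacent_intervals ((i₀.trans i₁).trans i₂) i₃,
    ← intervalIntegral.integral_add_adjacent_intervals (i₀.trans i₁) i₂,
    ← intervalIntegral.integral_add_adjacent_intervals i₀ i₁, e₀, e₁, e₂, e₃, zero_add] at hshift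
  refine hshift.trans ?_
  norm_num [abs_of_neg]
end

section
/- Let α ∈ (0, 1) and define h : ℝ → ℝ by h(x) = x^{−α} for x ∈ (0, 1] and h(x) = 0 otherwise; for ε > 0 define (G_ε h)(x) = (1/(2ε)) ∫_{x−ε}^{x+ε} h(y) dy. Then there exist constants c₁ > 0, c₂ > 0 and ε₀ > 0 such that for all ε ∈ (0, ε₀), c₁ ε^{1−α} ≤ ∫_ℝ |(G_ε h)(x) − h(x)| dx ≤ c₂ ε^{1−α}. -/
open MeasureTheory Set

/-- The function equal to `x ^ (-α)` on `(0, 1]` and to `0` elsewhere. -/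
noncomputable def truncatedPower (α x : ℝ) : ℝ :=
  if 0 < x ∧ x ≤ 1 then x ^ (-α) else 0

/-- The average of `f` over `[x - ε, x + ε]`. -/
noncomputable def movingAverage (ε : ℝ) (f : ℝ → ℝ) (x : ℝ) : ℝ :=
  (1 / (2 * ε)) * ∫ y in (x - ε)..(x + ε), f y

section TruncatedPower

variable {α : ℝ}

lemma truncatedPower_of_mem {x : ℝ} (hx : x ∈ Ioc (0 : ℝ) 1) :
    truncatedPower α x = x ^ (-α) := if_pos hx

lemma truncatedPower_of_nonpos {x : ℝ} (hx : x ≤ 0) : truncatedPower α x = 0 :=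
  if_neg fun h => absurd h.1 hx.not_gt

lemma truncatedPower_of_one_lt {x : ℝ} (hx : 1 < x) : truncatedPower α x = 0 :=
  if_neg fun h => absurd h.2 hx.not_ge

lemma truncatedPower_nonneg (x : ℝ) : 0 ≤ truncatedPower α x := by
  unfold truncatedPower
  split_ifs with h
  · exact Real.rpow_nonneg h.1.le _
  · exact le_rfl

lemma truncatedPower_antitoneOn (hα : 0 ≤ α) : AntitoneOn (truncatedPower α) (Ioi 0) := by
  intro x hx y hy hxy
  rw [mem_Ioi] at hx hy
  rcases le_or_gt y 1 with h1 | h1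
  · rw [truncatedPower_of_mem ⟨hy, h1⟩, truncatedPower_of_mem ⟨hx, hxy.trans h1⟩]
    exact Real.rpow_le_rpow_of_nonpos hx hxy (by linarith)
  · rw [truncatedPower_of_one_lt h1]
    exact truncatedPower_nonneg x

lemma integrable_truncatedPower (hα : α < 1) : Integrable (truncatedPower α) := by
  have h : truncatedPower α = indicator (Ioc 0 1) fun x => x ^ (-α) := by
    ext x
    simp only [truncatedPower, indicator, mem_Ioc]
  rw [h, integrable_indicator_iff measurableSet_Ioc,
    ← intervalIntegrable_iff_integrableOn_Ioc_of_le zero_le_one]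
  exact intervalIntegral.intervalIntegrable_rpow' (by linarith)

lemma integral_truncatedPower (hα : α < 1) {a b : ℝ} (ha : 0 ≤ a) (hab : a ≤ b) (hb : b ≤ 1) :
    ∫ x in a..b, truncatedPower α x = (b ^ (1 - α) - a ^ (1 - α)) / (1 - α) := by
  have h : ∫ x in a..b, truncatedPower α x = ∫ x in a..b, x ^ (-α) := by
    refine intervalIntegral.integral_congr_ae (Filter.Eventually.of_forall fun x hx => ?_)
    rw [uIoc_of_le hab] at hx
    exact truncatedPower_of_mem ⟨ha.trans_lt hx.1, hx.2.trans hb⟩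
  rw [h, integral_rpow (Or.inl (by linarith)), neg_add_eq_sub]

lemma integral_truncatedPower_of_nonpos (hα : α < 1) {a b : ℝ} (ha : a ≤ 0) (hb : 0 ≤ b)
    (hb1 : b ≤ 1) : ∫ x in a..b, truncatedPower α x = b ^ (1 - α) / (1 - α) := by
  have hI := integrable_truncatedPower hα
  have h0 : ∫ x in a..0, truncatedPower α x = 0 := by
    rw [intervalIntegral.integral_congr_ae (g := fun _ => 0)]
    · simp
    · refine Filter.Eventually.of_forall fun x hx => ?_
      rw [uIoc_of_le ha] at hx
      exact truncatedPower_of_nonpos hx.2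
  rw [← intervalIntegral.integral_add_adjacent_intervals (b := 0) hI.intervalIntegrable
    hI.intervalIntegrable, h0, integral_truncatedPower hα le_rfl hb hb1,
    Real.zero_rpow (by linarith)]
  ring

end TruncatedPower

section MovingAverage

variable {ε : ℝ} {f : ℝ → ℝ}

lemma continuous_movingAverage (hf : Integrable f) : Continuous (movingAverage ε f) := by
  have hc : Continuous fun b => ∫ y in (0 : ℝ)..b, f y :=
    intervalIntegral.continuous_primitive (fun _ _ => hf.intervalIntegrable) 0
  have h : movingAverage ε f = fun x =>
      (1 / (2 * ε)) * ((∫ y in (0 : ℝ)..(x + ε), f y) - ∫ y in (0 : ℝ)..(x - ε), f y) := by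
    ext x
    rw [movingAverage, intervalIntegral.integral_interval_sub_left hf.intervalIntegrable
      hf.intervalIntegrable]
  rw [h]
  exact continuous_const.mul ((hc.comp (continuous_add_const ε)).sub
    (hc.comp (continuous_id.sub continuous_const)))

lemma movingAverage_le (hε : 0 < ε) (hf : Integrable f) {x C : ℝ}
    (h : ∀ y ∈ Icc (x - ε) (x + ε), f y ≤ C) : movingAverage ε f x ≤ C := by
  have := intervalIntegral.integral_mono_on (by linarith) hf.intervalIntegrable
    (intervalIntegrable_const (μ := volume)) h
  rw [intervalIntegral.integral_const, smul_eq_mul] at this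
  rw [movingAverage, one_div, inv_mul_le_iff₀ (by linarith)]
  linarith

lemma le_movingAverage (hε : 0 < ε) (hf : Integrable f) {x C : ℝ}
    (h : ∀ y ∈ Icc (x - ε) (x + ε), C ≤ f y) : C ≤ movingAverage ε f x := by
  have := intervalIntegral.integral_mono_on (by linarith)
    (intervalIntegrable_const (μ := volume)) hf.intervalIntegrable h
  rw [intervalIntegral.integral_const, smul_eq_mul] at this
  rw [movingAverage, one_div, le_inv_mul_iff₀ (by linarith)]
  linarith

end MovingAverage

section Deviation

variable {α ε : ℝ}

/-- A pointwise majorant of the deviation of `truncatedPower α` from its moving average, in three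
pieces: around the singularity, on the monotone part, and around the jump at `1`. -/
noncomputable def deviationMajorant (α ε x : ℝ) : ℝ :=
  indicator (Ioc (-ε) ε)
      (fun x => (2 * ε) ^ (1 - α) / (1 - α) / (2 * ε) + truncatedPower α x) x
    + indicator (Ioc ε (1 - ε))
      (fun x => truncatedPower α (x - ε) - truncatedPower α (x + ε)) x
    + indicator (Ioc (1 - ε) (1 + ε)) (fun _ => (1 / 2 : ℝ) ^ (-α)) x

lemma movingAverage_truncatedPower_le (hα : α < 1) (hε : 0 < ε) (hε' : ε < 1 / 4) {x : ℝ}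
    (hx : x ∈ Ioc (-ε) ε) : movingAverage ε (truncatedPower α) x ≤
      (2 * ε) ^ (1 - α) / (1 - α) / (2 * ε) := by
  have h := intervalIntegral.integral_mono_interval (μ := volume) (f := truncatedPower α)
    (a := x - ε) (b := x + ε) (c := -(2 * ε)) (d := 2 * ε) (by linarith [hx.1]) (by linarith)
    (by linarith [hx.2]) (Filter.Eventually.of_forall truncatedPower_nonneg)
    (integrable_truncatedPower hα).intervalIntegrable
  rw [integral_truncatedPower_of_nonpos (a := -(2 * ε)) (b := 2 * ε) hα (by linarith)
    (by linarith) (by linarith)] at h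
  rw [movingAverage, one_div, div_eq_inv_mul _ (2 * ε)]
  gcongr

lemma abs_movingAverage_sub_truncatedPower_le (hα : α ∈ Ioo (0 : ℝ) 1) (hε : 0 < ε)
    (hε' : ε < 1 / 4) (x : ℝ) :
    |movingAverage ε (truncatedPower α) x - truncatedPower α x| ≤ deviationMajorant α ε x := by
  have hI := integrable_truncatedPower hα.2
  have hanti := truncatedPower_antitoneOn hα.1.le
  have hG0 : 0 ≤ movingAverage ε (truncatedPower α) x :=
    le_movingAverage hε hI fun y _ => truncatedPower_nonneg y
  have hh0 := truncatedPower_nonneg (α := α) x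
  unfold deviationMajorant
  rcases le_or_gt x (-ε) with h1 | h1
  · have : movingAverage ε (truncatedPower α) x ≤ 0 := movingAverage_le hε hI fun y hy =>
      (truncatedPower_of_nonpos (by linarith [hy.2])).le
    rw [le_antisymm this hG0, truncatedPower_of_nonpos (by linarith),
      indicator_of_notMem fun h => absurd h.1 (by linarith),
      indicator_of_notMem fun h => absurd h.1 (by linarith),
      indicator_of_notMem fun h => absurd h.1 (by linarith)]
    simp
  rcases le_or_gt x ε with h2 | h2
  · have := movingAverage_truncatedPower_le hα.2 hε hε' ⟨h1, h2⟩
    rw [indicator_of_mem (show x ∈ Ioc (-ε) ε from ⟨h1, h2⟩),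
      indicator_of_notMem fun h => absurd h.1 (by linarith),
      indicator_of_notMem fun h => absurd h.1 (by linarith), abs_le]
    constructor <;> linarith
  rcases le_or_gt x (1 - ε) with h3 | h3
  · have hu : movingAverage ε (truncatedPower α) x ≤ truncatedPower α (x - ε) :=
      movingAverage_le hε hI fun y hy => hanti (by rw [mem_Ioi]; linarith)
        (by rw [mem_Ioi]; linarith [hy.1]) hy.1
    have hl : truncatedPower α (x + ε) ≤ movingAverage ε (truncatedPower α) x :=
      le_movingAverage hε hI fun y hy => hanti (by rw [mem_Ioi]; linarith [hy.1])
        (by rw [mem_Ioi]; linarith) hy.2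
    have hu' : truncatedPower α x ≤ truncatedPower α (x - ε) :=
      hanti (by rw [mem_Ioi]; linarith) (by rw [mem_Ioi]; linarith) (by linarith)
    have hl' : truncatedPower α (x + ε) ≤ truncatedPower α x :=
      hanti (by rw [mem_Ioi]; linarith) (by rw [mem_Ioi]; linarith) (by linarith)
    rw [indicator_of_mem (show x ∈ Ioc ε (1 - ε) from ⟨h2, h3⟩),
      indicator_of_notMem fun h => absurd h.2 (by linarith),
      indicator_of_notMem fun h => absurd h.1 (by linarith), abs_le]
    constructor <;> linarith
  have hhalf : ∀ y, 1 / 2 ≤ y → truncatedPower α y ≤ (1 / 2 : ℝ) ^ (-α) := fun y hy => by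
    rw [← truncatedPower_of_mem (α := α) (x := 1 / 2) (by norm_num)]
    exact hanti (by norm_num) (by rw [mem_Ioi]; linarith) hy
  rcases le_or_gt x (1 + ε) with h4 | h4
  · have hG : movingAverage ε (truncatedPower α) x ≤ (1 / 2 : ℝ) ^ (-α) :=
      movingAverage_le hε hI fun y hy => hhalf y (by linarith [hy.1])
    have hh := hhalf x (by linarith)
    rw [indicator_of_mem (show x ∈ Ioc (1 - ε) (1 + ε) from ⟨h3, h4⟩),
      indicator_of_notMem fun h => absurd h.2 (by linarith),
      indicator_of_notMem fun h => absurd h.2 (by linarith), abs_le]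
    constructor <;> linarith
  · have : movingAverage ε (truncatedPower α) x ≤ 0 := movingAverage_le hε hI fun y hy =>
      (truncatedPower_of_one_lt (by linarith [hy.1])).le
    rw [le_antisymm this hG0, truncatedPower_of_one_lt (by linarith),
      indicator_of_notMem fun h => absurd h.2 (by linarith),
      indicator_of_notMem fun h => absurd h.2 (by linarith),
      indicator_of_notMem fun h => absurd h.2 (by linarith)]
    simp

lemma integrable_deviationMajorant_and_integral_eq (hα : α < 1) (hε : 0 < ε) (hε' : ε < 1 / 4) :
    Integrable (deviationMajorant α ε) ∧ ∫ x, deviationMajorant α ε x =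
      ((2 * ε) ^ (1 - α) / (1 - α) + ε ^ (1 - α) / (1 - α))
      + ((1 - 2 * ε) ^ (1 - α) / (1 - α) - (1 - (2 * ε) ^ (1 - α)) / (1 - α))
      + 2 * ε * (1 / 2 : ℝ) ^ (-α) := by
  have hI := integrable_truncatedPower hα
  have hc : ∀ c a b : ℝ, IntegrableOn (fun _ => c) (Ioc a b) := fun c a b =>
    integrableOn_const (by simp)
  have i1 := ((hc ((2 * ε) ^ (1 - α) / (1 - α) / (2 * ε)) (-ε) ε).add
    hI.integrableOn).integrable_indicator measurableSet_Ioc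
  have i2 := ((hI.comp_sub_right ε).sub (hI.comp_add_right ε)).integrableOn.integrable_indicator
    (measurableSet_Ioc (a := ε) (b := 1 - ε))
  have i3 := (hc ((1 / 2 : ℝ) ^ (-α)) (1 - ε) (1 + ε)).integrable_indicator measurableSet_Ioc
  refine ⟨(i1.add i2).add i3, ?_⟩
  refine (integral_add (i1.add i2) i3).trans ?_
  refine congrArg₂ (· + ·) ((integral_add i1 i2).trans (congrArg₂ (· + ·) ?_ ?_)) ?_
  · rw [integral_indicator measurableSet_Ioc, ← intervalIntegral.integral_of_le (by linarith)]
    refine (intervalIntegral.integral_add intervalIntegrable_const hI.intervalIntegrable).trans ?_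
    rw [integral_truncatedPower_of_nonpos hα (by linarith) hε.le (by linarith),
      intervalIntegral.integral_const, smul_eq_mul]
    field_simp
    ring
  · rw [integral_indicator measurableSet_Ioc, ← intervalIntegral.integral_of_le (by linarith)]
    refine (intervalIntegral.integral_sub (hI.comp_sub_right ε).intervalIntegrable
      (hI.comp_add_right ε).intervalIntegrable).trans ?_
    rw [intervalIntegral.integral_comp_sub_right, intervalIntegral.integral_comp_add_right,
      integral_truncatedPower_of_nonpos hα (by linarith) (by linarith) (by linarith),
      integral_truncatedPower hα (by linarith) (by linarith) (by linarith)]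
    have e1 : 1 - ε - ε = 1 - 2 * ε := by ring
    have e2 : ε + ε = 2 * ε := by ring
    rw [e1, e2, sub_add_cancel, Real.one_rpow]
  · rw [integral_indicator measurableSet_Ioc, ← intervalIntegral.integral_of_le (by linarith),
      intervalIntegral.integral_const, smul_eq_mul]
    ring

lemma integral_deviationMajorant_le (hα : α ∈ Ioo (0 : ℝ) 1) (hε : 0 < ε) (hε' : ε < 1 / 4) :
    ∫ x, deviationMajorant α ε x ≤
      (5 / (1 - α) + 2 * (1 / 2 : ℝ) ^ (-α)) * ε ^ (1 - α) := by
  rw [(integrable_deviationMajorant_and_integral_eq hα.2 hε hε').2]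
  have hα' : 0 < 1 - α := sub_pos.2 hα.2
  have h2 : (2 * ε) ^ (1 - α) ≤ 2 * ε ^ (1 - α) := by
    rw [Real.mul_rpow (by norm_num) hε.le]
    gcongr
    exact Real.rpow_le_self_of_one_le (by norm_num) (by linarith [hα.1])
  have h1 : (1 - 2 * ε) ^ (1 - α) ≤ 1 := Real.rpow_le_one (by linarith) (by linarith) hα'.le
  have h3 : ε ≤ ε ^ (1 - α) := Real.self_le_rpow_of_le_one hε.le (by linarith) (by linarith [hα.1])
  have hM : (0 : ℝ) ≤ (1 / 2) ^ (-α) := by positivity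
  calc _ = (2 * (2 * ε) ^ (1 - α) + ε ^ (1 - α) + (1 - 2 * ε) ^ (1 - α) - 1) / (1 - α)
        + 2 * (1 / 2 : ℝ) ^ (-α) * ε := by ring
    _ ≤ (5 * ε ^ (1 - α)) / (1 - α) + 2 * (1 / 2 : ℝ) ^ (-α) * ε ^ (1 - α) := by
        gcongr
        linarith
    _ = _ := by ring

lemma integrable_movingAverage_sub_truncatedPower (hα : α ∈ Ioo (0 : ℝ) 1) (hε : 0 < ε)
    (hε' : ε < 1 / 4) :
    Integrable fun x => movingAverage ε (truncatedPower α) x - truncatedPower α x :=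
  (integrable_deviationMajorant_and_integral_eq hα.2 hε hε').1.mono'
    ((continuous_movingAverage (integrable_truncatedPower hα.2)).aestronglyMeasurable.sub
      (integrable_truncatedPower hα.2).aestronglyMeasurable)
    (Filter.Eventually.of_forall (abs_movingAverage_sub_truncatedPower_le hα hε hε'))

lemma le_abs_movingAverage_sub_truncatedPower (hα : α < 1) (hε : 0 < ε) (hε' : ε < 1 / 4)
    {x : ℝ} (hx : x ∈ Ioc (-(ε / 2)) 0) :
    1 / (2 * ε) * ((ε / 2) ^ (1 - α) / (1 - α)) ≤
      |movingAverage ε (truncatedPower α) x - truncatedPower α x| := by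
  have h := intervalIntegral.integral_mono_interval (μ := volume) (f := truncatedPower α)
    (a := 0) (b := ε / 2) (c := x - ε) (d := x + ε) (by linarith [hx.2]) (by linarith)
    (by linarith [hx.1]) (Filter.Eventually.of_forall truncatedPower_nonneg)
    (integrable_truncatedPower hα).intervalIntegrable
  rw [integral_truncatedPower_of_nonpos hα le_rfl (by linarith) (by linarith)] at h
  rw [truncatedPower_of_nonpos hx.2, sub_zero]
  refine le_trans ?_ (le_abs_self _)
  rw [movingAverage]
  gcongr

lemma le_integral_abs_movingAverage_sub_truncatedPower (hα : α ∈ Ioo (0 : ℝ) 1) (hε : 0 < ε)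
    (hε' : ε < 1 / 4) :
    (1 / 2 : ℝ) ^ (1 - α) / (4 * (1 - α)) * ε ^ (1 - α) ≤
      ∫ x, |movingAverage ε (truncatedPower α) x - truncatedPower α x| := by
  have hα' : 1 - α ≠ 0 := (sub_pos.2 hα.2).ne'
  have hI := (integrable_movingAverage_sub_truncatedPower hα hε hε').abs
  calc _ = ∫ _ in Ioc (-(ε / 2)) 0, 1 / (2 * ε) * ((ε / 2) ^ (1 - α) / (1 - α)) := by
        rw [← intervalIntegral.integral_of_le (by linarith), intervalIntegral.integral_const,
          smul_eq_mul, div_eq_mul_one_div ε 2, Real.mul_rpow hε.le (by norm_num)]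
        field_simp
        ring
    _ ≤ ∫ x in Ioc (-(ε / 2)) 0, |movingAverage ε (truncatedPower α) x - truncatedPower α x| :=
        setIntegral_mono_on (integrableOn_const (by simp)) hI.integrableOn measurableSet_Ioc
          fun x hx => le_abs_movingAverage_sub_truncatedPower hα.2 hε hε' hx
    _ ≤ _ := setIntegral_le_integral hI (Filter.Eventually.of_forall fun _ => abs_nonneg _)

end Deviation

/-- Mollifying a power-law singularity: for `h(x) = x^{−α}` on `(0,1]` (and `0`
elsewhere) with `α ∈ (0,1)`, the averaging operator `G_ε` satisfies
`‖G_ε h − h‖_{L¹(ℝ)} ∼ ε^{1−α}` as `ε → 0⁺`. -/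
theorem stmt17 (α : ℝ) (hα : α ∈ Set.Ioo (0:ℝ) 1)
    (h : ℝ → ℝ) (hh : ∀ x : ℝ, h x = if 0 < x ∧ x ≤ 1 then x^(-α) else 0) :
    ∃ c₁ > (0:ℝ), ∃ c₂ > (0:ℝ), ∃ ε₀ > (0:ℝ), ∀ ε ∈ Set.Ioo (0:ℝ) ε₀,
      c₁ * ε^(1-α) ≤ (∫ x : ℝ, |((1/(2*ε)) * ∫ y in (x-ε)..(x+ε), h y) - h x|) ∧
      (∫ x : ℝ, |((1/(2*ε)) * ∫ y in (x-ε)..(x+ε), h y) - h x|) ≤ c₂ * ε^(1-α) := by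
  obtain rfl : h = truncatedPower α := funext hh
  have hα' : 0 < 1 - α := sub_pos.2 hα.2
  refine ⟨(1 / 2 : ℝ) ^ (1 - α) / (4 * (1 - α)), by positivity,
    5 / (1 - α) + 2 * (1 / 2 : ℝ) ^ (-α), by positivity, 1 / 4, by norm_num, ?_⟩
  rintro ε ⟨hε, hε'⟩
  exact ⟨le_integral_abs_movingAverage_sub_truncatedPower hα hε hε',
    (integral_mono (integrable_movingAverage_sub_truncatedPower hα hε hε').abs
      (integrable_deviationMajorant_and_integral_eq hα.2 hε hε').1
      (abs_movingAverage_sub_truncatedPower_le hα hε hε')).trans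
      (integral_deviationMajorant_le hα hε hε')⟩
end
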